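/- arXiv:1005.4277 — 2 statements merged into one kernel-verified Lean document; each statement's English description precedes it below -/
import Mathlib

section
/- Let a, b, c ∈ ℂ \ (1/2)ℤ with a+b−c ∈ {0,1,…,n−1}. Then Σ_{t=0}^{n−1−(a+b−c)} C^{b, n−1−c, n−1−a}_{a+b−c+t, n−1−t, n−1} · C^{c, n−1−b, a}_{t, n−1+c−a−b−t, 0} = [2a+n¦2a+1]. (This is the value of the theta graph: the composition Y_{a,b}^c ∘ Y_c^{a,b}, for suitable colorings, acts as [2a+n¦2a+1] times the identity.) -/
open Complex Finset Filter
open scoped Matrix Kronecker Real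

noncomputable section

/-- `ξ^a = exp(π √-1 a / n)` for the `2n`-th root of unity `ξ = exp(π √-1/n)`. -/
def xic (n : ℕ) (a : ℂ) : ℂ := Complex.exp (Real.pi * Complex.I * a / n)

/-- `{a} = ξ^a - ξ^{-a}`. -/
def qn (n : ℕ) (a : ℂ) : ℂ := xic n a - xic n (-a)

/-- `{k}! = {1}{2}⋯{k}`. -/
def qfac (n : ℕ) (k : ℕ) : ℂ := ∏ j ∈ Finset.range k, qn n ((j : ℂ) + 1)

-- The quantum binomial `[a¦b]`, defined (and nonzero) only when `a - b ∈ {0,1,…,n-1}`.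
open Classical in
def qbin (n : ℕ) (a b : ℂ) : ℂ :=
  if h : ∃ k : ℕ, k < n ∧ a - b = (k : ℂ) then
    ∏ j ∈ Finset.range h.choose, qn n (a - (j : ℂ)) / qn n (a - b - (j : ℂ))
  else 0

/-- `[a] = {a}/{1}`. -/
def qint (n : ℕ) (a : ℂ) : ℂ := qn n a / qn n 1

/-- `a` is not a half-integer. -/
def NotHalfInt (a : ℂ) : Prop := ∀ m : ℤ, a ≠ (m : ℂ) / 2

/-- `x ∈ {0, 1, …, n-1}` (as a complex number). -/
def InZn (n : ℕ) (x : ℂ) : Prop := ∃ k : ℕ, k < n ∧ x = (k : ℂ)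

/-- The matrix of `E` on `V^a = ℂ^n`: `E e_j = [j] e_{j-1}` (independent of `a`). -/
def Emat (n : ℕ) : Matrix (Fin n) (Fin n) ℂ :=
  Matrix.of fun i j => if (j : ℕ) = (i : ℕ) + 1 then qint n ((j : ℕ) : ℂ) else 0

/-- The matrix of `F` on `V^a`: `F e_j = [2a-j] e_{j+1}` (with `e_n = 0`). -/
def Fmat (n : ℕ) (a : ℂ) : Matrix (Fin n) (Fin n) ℂ :=
  Matrix.of fun i j => if (i : ℕ) = (j : ℕ) + 1 then qint n (2 * a - ((j : ℕ) : ℂ)) else 0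

/-- The matrix of `K` on `V^a`: `K e_j = ξ^{a-j} e_j`. -/
def Kmat (n : ℕ) (a : ℂ) : Matrix (Fin n) (Fin n) ℂ :=
  Matrix.of fun i j => if i = j then xic n (a - ((i : ℕ) : ℂ)) else 0

/-- The matrix of `K⁻¹` on `V^a`. -/
def Kinvmat (n : ℕ) (a : ℂ) : Matrix (Fin n) (Fin n) ℂ :=
  Matrix.of fun i j => if i = j then xic n (-(a - ((i : ℕ) : ℂ))) else 0

/-- The `R`-matrix `R_{a,b} : V^a ⊗ V^b → V^b ⊗ V^a`:
`R(e_u ⊗ e_v) = Σ_m {m}! ξ^{2(a-u)(b-v) - m(a-b-u+v) - m(m+1)/2} [u¦u-m] [2b-v¦2b-v-m]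
e_{v+m} ⊗ e_{u-m}`; the entry at row `(h,k)`, column `(u,v)` is the coefficient of
`e_h ⊗ e_k`, nonzero only when `h + k = u + v` and `h ≥ v` (with `m = h - v`). -/
def Rmat (n : ℕ) (a b : ℂ) : Matrix (Fin n × Fin n) (Fin n × Fin n) ℂ :=
  Matrix.of fun p q =>
    if ((p.1 : ℕ) + (p.2 : ℕ) = (q.1 : ℕ) + (q.2 : ℕ)) ∧ ((q.2 : ℕ) ≤ (p.1 : ℕ)) then
      (fun m : ℕ =>
        qfac n m *
        xic n (2 * (a - ((q.1 : ℕ) : ℂ)) * (b - ((q.2 : ℕ) : ℂ))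
            - (m : ℂ) * (a - b - ((q.1 : ℕ) : ℂ) + ((q.2 : ℕ) : ℂ))
            - (m : ℂ) * ((m : ℂ) + 1) / 2) *
        qbin n ((q.1 : ℕ) : ℂ) (((q.1 : ℕ) : ℂ) - (m : ℂ)) *
        qbin n (2 * b - ((q.2 : ℕ) : ℂ)) (2 * b - ((q.2 : ℕ) : ℂ) - (m : ℂ)))
      ((p.1 : ℕ) - (q.2 : ℕ))
    else 0

/-- The Clebsch-Gordan quantum coefficient `C^{a,b,c}_{u,v,t}`. -/
def CG (n : ℕ) (a b c : ℂ) (u v t : ℕ) : ℂ :=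
  Complex.exp (Real.pi * Complex.I * (c - a - b) / 2) *
  (-1 : ℂ) ^ ((v : ℤ) - (t : ℤ)) *
  xic n (((v : ℂ) * (2 * b - (v : ℂ) + 1) - (u : ℂ) * (2 * a - (u : ℂ) + 1)) / 2) *
  (qbin n (2 * c) (2 * c - (t : ℂ)))⁻¹ *
  qbin n (2 * c) (a + b + c - ((n : ℂ) - 1)) *
  ∑ z ∈ Finset.range (t + 1),
    (-1 : ℂ) ^ z * xic n ((2 * (z : ℂ) - (t : ℂ)) * (2 * c - (t : ℂ) + 1) / 2) *
    qbin n (a + b - c) ((u : ℂ) - (z : ℂ)) *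
    qbin n (2 * a - (u : ℂ) + (z : ℂ)) (2 * a - (u : ℂ)) *
    qbin n (2 * b - (v : ℂ) + ((t : ℂ) - (z : ℂ))) (2 * b - (v : ℂ))

-- The inclusion `Y_c^{a,b} : V^c → V^a ⊗ V^b`.
open Classical in
def Yinc (n : ℕ) (a b c : ℂ) : Matrix (Fin n × Fin n) (Fin n) ℂ :=
  Matrix.of fun p t =>
    if ((p.1 : ℕ) : ℂ) + ((p.2 : ℕ) : ℂ) - ((t : ℕ) : ℂ) = a + b - c then
      CG n a b c (p.1 : ℕ) (p.2 : ℕ) (t : ℕ)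
    else 0

-- The projection `Y_{a,b}^c : V^a ⊗ V^b → V^c`.
open Classical in
def Yproj (n : ℕ) (a b c : ℂ) : Matrix (Fin n) (Fin n × Fin n) ℂ :=
  Matrix.of fun t p =>
    if ((p.1 : ℕ) : ℂ) + ((p.2 : ℕ) : ℂ) - ((t : ℕ) : ℂ) = a + b - c then
      CG n ((n : ℂ) - 1 - b) ((n : ℂ) - 1 - a) ((n : ℂ) - 1 - c)
        (n - 1 - (p.2 : ℕ)) (n - 1 - (p.1 : ℕ)) (n - 1 - (t : ℕ))
    else 0

-- Extracts the natural number `k` with `x = k` (0 if there is none).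
open Classical in
def natIdx (x : ℂ) : ℕ := if h : ∃ k : ℕ, x = (k : ℂ) then h.choose else 0

/-- The `SL(2,ℂ)` quantum 6j-symbol `{a b e; d c f}_ξ`. -/
def sixj (n : ℕ) (a b e d c f : ℂ) : ℂ :=
  (-1 : ℂ) ^ (n - 1 + natIdx (a + f - c)) *
  (qbin n (2 * f + (n : ℂ)) (2 * f + 1))⁻¹ *
  (qfac n (natIdx (d + e - c)) * qfac n (natIdx (a + b - e)) /
    (qfac n (natIdx (b + d - f)) * qfac n (natIdx (a + f - c)))) *
  qbin n (2 * e) (a + b + e + 1 - (n : ℂ)) *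
  (qbin n (2 * e) (e + c - d))⁻¹ *
  ∑ z ∈ Finset.Icc (natIdx (d + e - c) - natIdx (b + d - f))
      (min (natIdx (d + e - c)) (natIdx (a + f - c))),
    (-1 : ℂ) ^ z * qbin n (a + f + c + 1) (2 * c + (z : ℂ) + 1) *
    qbin n ((a + c - f) + (z : ℂ)) (a + c - f) *
    qbin n ((b + f - d) + (d + e - c) - (z : ℂ)) (b + f - d) *
    qbin n ((d + c - e) + (z : ℂ)) (d + f - b)

/-- The tetrahedral symbol `{a b e; d c f}_tet = {a b e; d c f}_ξ · [2f+n¦2f+1]`. -/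
def sixjtet (n : ℕ) (a b e d c f : ℂ) : ℂ :=
  sixj n a b e d c f * qbin n (2 * f + (n : ℂ)) (2 * f + 1)

/-- The Lobachevsky function `Λ(x) = -∫_0^x log|2 sin t| dt`. -/
def lob (x : ℝ) : ℝ := -∫ t in (0 : ℝ)..x, Real.log |2 * Real.sin t|

/-- A triple of integers is admissible. -/
def Admissible (n : ℕ) (i j k : ℤ) : Prop :=
  0 < i ∧ 0 < j ∧ 0 < k ∧ i < (n : ℤ) - 1 ∧ j < (n : ℤ) - 1 ∧ k < (n : ℤ) - 1 ∧
  (n : ℤ) - 1 < i + j + k ∧ i + j + k < 2 * ((n : ℤ) - 1) ∧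
  0 < i + j - k ∧ 0 < j + k - i ∧ 0 < k + i - j ∧
  i + j - k < (n : ℤ) - 1 ∧ j + k - i < (n : ℤ) - 1 ∧ k + i - j < (n : ℤ) - 1

/-!
After substituting the Clebsch–Gordan coefficients, the theta graph is a double sum, over `t` and
over the offset `s = z - t` of the summation variable `z` in the first coefficient. Since
`ξ^n = -1`, we have `{i}!{j}! = {i+j}!` whenever `i + j = n - 1`; this turns every summand into a
function of `t` times a function of `s`, and both single sums are quantum Chu–Vandermonde
convolutions. Their product cancels the normalising factor `[2(n-1-a)¦n-1-2a]⁻¹`, and the two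
binomials that remain merge into `[2a+n¦2a+1]` by the same factorial identity.
-/

lemma sum_range_eq_sum_antidiagonal {M : Type*} [AddCommMonoid M] {f : ℕ → M} {k t m : ℕ}
    (hm : t + k < m) (hf : ∀ z, z < t ∨ t + k < z → f z = 0) :
    ∑ z ∈ range m, f z = ∑ q ∈ antidiagonal k, f (t + q.1) := by
  obtain ⟨r, rfl⟩ : ∃ r, m = t + (k + 1) + r := ⟨m - (t + (k + 1)), by omega⟩
  rw [sum_range_add, sum_range_add, Nat.sum_antidiagonal_eq_sum_range_succ_mk,
    sum_eq_zero fun z hz => hf z (.inl (mem_range.1 hz)),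
    sum_eq_zero fun z _ => hf (t + (k + 1) + z) (.inr (by omega)), zero_add, add_zero]

section QuantumBinomial

variable {A K : Type*} [CommRing A] [Field K] (e : AddChar A K)

/-- The quantum bracket `{x} = e(x) - e(-x)` of an additive character `e`; for `e(x) = ξ^x` it is
`qn`. -/
def qBracket (x : A) : K := e x - e (-x)

/-- The falling product `{x}{x-1}⋯{x-m+1}`, written `{x, x-m}` in the paper. -/
def qFalling (x : A) (m : ℕ) : K := ∏ j ∈ range m, qBracket e (x - j)

/-- The quantum factorial `{m}!`. -/
def qFactorial (m : ℕ) : K := ∏ j ∈ range m, qBracket e (j + 1)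

/-- The quantum binomial `[x¦x-m]`, indexed by the difference `m` of its entries so that no
condition relating the two entries is needed. It is `0` by division by zero when `{m}! = 0`. -/
def qChoose (x : A) (m : ℕ) : K := qFalling e x m / qFactorial e m

lemma qBracket_zero : qBracket e 0 = 0 := by simp [qBracket]

lemma qBracket_neg (x : A) : qBracket e (-x) = -qBracket e x := by simp [qBracket]

lemma qBracket_add (x y : A) :
    qBracket e (x + y) = e (-y) * qBracket e x + e x * qBracket e y := by
  simp only [qBracket, neg_add, AddChar.map_add_eq_mul]
  ring

lemma qBracket_add_eq_neg {p : A} (hp : e p = -1) (x : A) :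
    qBracket e (x + p) = -qBracket e x := by
  simp only [qBracket, neg_add, AddChar.map_add_eq_mul, AddChar.map_neg_eq_inv e p, hp]
  ring

lemma qFalling_add (x : A) (p q : ℕ) :
    qFalling e x (p + q) = qFalling e x p * qFalling e (x - p) q := by
  simp only [qFalling, prod_range_add, Nat.cast_add, sub_sub]

lemma qFalling_reflect (x : A) (m : ℕ) :
    qFalling e x m = (-1) ^ m * qFalling e (m - 1 - x) m := by
  calc qFalling e x m = ∏ j ∈ range m, -qBracket e (m - 1 - x - j) := by
        rw [qFalling, ← prod_range_reflect]
        refine prod_congr rfl fun j hj => ?_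
        rw [← qBracket_neg, Nat.sub_sub, Nat.cast_sub (by have := mem_range.1 hj; omega)]
        push_cast
        ring_nf
    _ = (-1) ^ m * qFalling e (m - 1 - x) m := by rw [prod_neg, card_range, qFalling]

lemma qFalling_add_eq {p : A} (hp : e p = -1) (x : A) (m : ℕ) :
    qFalling e (x + p) m = (-1) ^ m * qFalling e x m := by
  simp only [qFalling, add_sub_right_comm, qBracket_add_eq_neg e hp, prod_neg, card_range]

lemma qFalling_natCast_self (m : ℕ) : qFalling e (m : A) m = qFactorial e m := by
  rw [qFalling, ← prod_range_reflect, qFactorial]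
  refine prod_congr rfl fun j hj => ?_
  rw [Nat.sub_sub, Nat.cast_sub (by have := mem_range.1 hj; omega)]
  push_cast
  ring_nf

lemma qFalling_natCast_mul_qFactorial (i j : ℕ) :
    qFalling e ((i + j : ℕ) : A) i * qFactorial e j = qFactorial e (i + j) := by
  rw [← qFalling_natCast_self e j, ← qFalling_natCast_self e (i + j), qFalling_add]
  simp

lemma qFactorial_ne_zero_of_le {i m : ℕ} (him : i ≤ m) (hm : qFactorial e m ≠ 0) :
    qFactorial e i ≠ 0 := by
  rw [qFactorial, prod_ne_zero_iff] at hm ⊢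
  exact fun j hj => hm j (range_mono him hj)

lemma qFactorial_mul_qFactorial {i j : ℕ} (hp : e (i + j + 1) = -1) :
    qFactorial e i * qFactorial e j = qFactorial e (i + j) := by
  have h : qFalling e ((i + j : ℕ) : A) i = qFactorial e i := by
    rw [qFalling_reflect, ← qFalling_add_eq e hp, ← qFalling_natCast_self]
    push_cast
    ring_nf
  rw [← qFalling_natCast_mul_qFactorial, h]

lemma qChoose_zero (x : A) : qChoose e x 0 = 1 := by simp [qChoose, qFalling, qFactorial]

lemma qChoose_reflect (x : A) (m : ℕ) :
    qChoose e x m = (-1) ^ m * qChoose e (m - 1 - x) m := by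
  rw [qChoose, qFalling_reflect, mul_div_assoc, qChoose]

lemma qChoose_add_eq {p : A} (hp : e p = -1) (x : A) (m : ℕ) :
    qChoose e (x + p) m = (-1) ^ m * qChoose e x m := by
  rw [qChoose, qFalling_add_eq e hp, mul_div_assoc, qChoose]

lemma qChoose_add {i j : ℕ} (hp : e (i + j + 1) = -1) (x : A) :
    qChoose e x (i + j) = qChoose e x i * qChoose e (x - i) j := by
  simp only [qChoose, qFalling_add, ← qFactorial_mul_qFactorial e hp, mul_div_mul_comm]

lemma qChoose_natCast {i j : ℕ} (hj : qFactorial e j ≠ 0) :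
    qChoose e ((i + j : ℕ) : A) i = qFactorial e (i + j) / (qFactorial e i * qFactorial e j) := by
  rw [qChoose, ← qFalling_natCast_mul_qFactorial, mul_div_mul_right _ _ hj]

lemma qFactorial_succ (m : ℕ) :
    qFactorial e (m + 1) = qFactorial e m * qBracket e ((m + 1 : ℕ) : A) := by
  simp [qFactorial, prod_range_succ]

lemma qBracket_mul_qChoose_succ (x : A) {m : ℕ} (hm : qBracket e ((m + 1 : ℕ) : A) ≠ 0) :
    qBracket e ((m + 1 : ℕ) : A) * qChoose e x (m + 1) = qBracket e (x - m) * qChoose e x m := by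
  have hsucc : qFalling e x (m + 1) = qFalling e x m * qBracket e (x - m) := prod_range_succ _ _
  rw [qChoose, hsucc, qFactorial_succ, mul_div_mul_comm, ← qChoose, mul_left_comm,
    mul_div_cancel₀ _ hm, mul_comm]

/-- The `(i, j)` summand of the quantum Chu–Vandermonde convolution of `[x]` and `[y]`. -/
def vandermondeTerm (x y : A) (i j : ℕ) : K :=
  e (i * y - j * x) * (qChoose e x i * qChoose e y j)

lemma vandermondeTerm_succ_add_succ (x y : A) {i j : ℕ}
    (hi : qBracket e ((i + 1 : ℕ) : A) ≠ 0) (hj : qBracket e ((j + 1 : ℕ) : A) ≠ 0) :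
    e (-j) * qBracket e ((i + 1 : ℕ) : A) * vandermondeTerm e x y (i + 1) j +
        e i * qBracket e ((j + 1 : ℕ) : A) * vandermondeTerm e x y i (j + 1) =
      qBracket e (x + y - (i + j : ℕ)) * vandermondeTerm e x y i j := by
  have hsplit : qBracket e (x + y - (i + j : ℕ)) =
      e (i - x) * qBracket e (y - j) + e (y - j) * qBracket e (x - i) := by
    rw [← neg_sub x, ← qBracket_add]
    push_cast
    ring_nf
  have hphase_x : e (-j) * e ((i + 1 : ℕ) * y - j * x) = e (i * y - j * x) * e (y - j) := by
    simp only [← AddChar.map_add_eq_mul]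
    push_cast
    ring_nf
  have hphase_y : e i * e (i * y - (j + 1 : ℕ) * x) = e (i * y - j * x) * e (i - x) := by
    simp only [← AddChar.map_add_eq_mul]
    push_cast
    ring_nf
  simp only [vandermondeTerm, hsplit]
  linear_combination
    qBracket e ((i + 1 : ℕ) : A) * qChoose e x (i + 1) * qChoose e y j * hphase_x +
    qBracket e ((j + 1 : ℕ) : A) * qChoose e x i * qChoose e y (j + 1) * hphase_y +
    e (i * y - j * x) * e (y - j) * qChoose e y j * qBracket_mul_qChoose_succ e x hi +
    e (i * y - j * x) * e (i - x) * qChoose e x i * qBracket_mul_qChoose_succ e y hj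

/-- Multiplying by `{k+1} = {i+j}` and splitting this bracket turns the sum for `k + 1` into
`{x+y-k}` times the sum for `k`. -/
theorem sum_antidiagonal_vandermondeTerm (x y : A) {k : ℕ} (hk : qFactorial e k ≠ 0) :
    ∑ p ∈ antidiagonal k, vandermondeTerm e x y p.1 p.2 = qChoose e (x + y) k := by
  induction k with
  | zero => simp [vandermondeTerm, qChoose_zero]
  | succ k ih =>
    have hne {i : ℕ} (hi : i ≤ k) : qBracket e ((i + 1 : ℕ) : A) ≠ 0 := by
      have := qFactorial_ne_zero_of_le e (Nat.succ_le_succ hi) hk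
      exact right_ne_zero_of_mul (qFactorial_succ e i ▸ this)
    apply mul_left_cancel₀ (hne le_rfl)
    calc qBracket e ((k + 1 : ℕ) : A) * ∑ p ∈ antidiagonal (k + 1), vandermondeTerm e x y p.1 p.2
        = ∑ p ∈ antidiagonal (k + 1), e (-p.2) * qBracket e p.1 * vandermondeTerm e x y p.1 p.2 +
          ∑ p ∈ antidiagonal (k + 1), e p.1 * qBracket e p.2 * vandermondeTerm e x y p.1 p.2 := by
          rw [mul_sum, ← sum_add_distrib]
          refine sum_congr rfl fun p hp => ?_
          rw [← mem_antidiagonal.1 hp, Nat.cast_add, qBracket_add, add_mul]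
      _ = ∑ p ∈ antidiagonal k,
          (e (-p.2) * qBracket e ((p.1 + 1 : ℕ) : A) * vandermondeTerm e x y (p.1 + 1) p.2 +
            e p.1 * qBracket e ((p.2 + 1 : ℕ) : A) * vandermondeTerm e x y p.1 (p.2 + 1)) := by
          rw [Nat.sum_antidiagonal_succ, Nat.sum_antidiagonal_succ', sum_add_distrib]
          simp [qBracket_zero]
      _ = ∑ p ∈ antidiagonal k, qBracket e (x + y - k) * vandermondeTerm e x y p.1 p.2 := by
          refine sum_congr rfl fun p hp => ?_
          have hpk := mem_antidiagonal.1 hp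
          rw [vandermondeTerm_succ_add_succ e x y (hne (by omega)) (hne (by omega)), hpk]
      _ = qBracket e ((k + 1 : ℕ) : A) * qChoose e (x + y) (k + 1) := by
          rw [← mul_sum, ih (qFactorial_ne_zero_of_le e k.le_succ hk),
            qBracket_mul_qChoose_succ e _ (hne le_rfl)]

/-- On the left `s` and `t` are coupled through `[x+s¦x-t]` and `[y+s'¦y-t']`. They separate because
`{s+t}!{s'+t'}! = {s+s'}!{t+t'}!`. -/
lemma qChoose_natCast_mul_qChoose_add {s s' t t' : ℕ}
    (hp : e ((s + s' : ℕ) + (t + t' : ℕ) + 1) = -1) (hf : qFactorial e (s + s' + (t + t')) ≠ 0)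
    (x y : A) :
    qChoose e ((s + s' : ℕ) : A) s * qChoose e ((t + t' : ℕ) : A) t *
        (qChoose e (x + s) (t + s) * qChoose e (y + s') (t' + s')) =
      (-1) ^ (s + s') * (qChoose e (-x - 1) s * qChoose e (-y - 1) s') *
        (qChoose e x t * qChoose e y t') := by
  have hsplit (z : A) (i j : ℕ) :
      qFalling e (z + j) (i + j) = (-1) ^ j * qFalling e (-z - 1) j * qFalling e z i := by
    rw [add_comm i j, qFalling_add, qFalling_reflect]
    ring_nf
  have hfac : qFactorial e (t + s) * qFactorial e (t' + s') =
      qFactorial e (s + s') * qFactorial e (t + t') := by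
    rw [qFactorial_mul_qFactorial, qFactorial_mul_qFactorial e hp]
    · congr 1; omega
    · rw [← hp]; push_cast; ring_nf
  have hne {m : ℕ} (h : m ≤ s + s' + (t + t')) := qFactorial_ne_zero_of_le e h hf
  have hs : qFactorial e s ≠ 0 := hne (by omega)
  have hs' : qFactorial e s' ≠ 0 := hne (by omega)
  have ht : qFactorial e t ≠ 0 := hne (by omega)
  have ht' : qFactorial e t' ≠ 0 := hne (by omega)
  have hss' : qFactorial e (s + s') ≠ 0 := hne (by omega)
  have htt' : qFactorial e (t + t') ≠ 0 := hne (by omega)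
  rw [qChoose_natCast e hs', qChoose_natCast e ht']
  simp only [qChoose, hsplit, div_mul_div_comm, hfac, pow_add]
  field_simp

theorem sum_sum_qChoose {k N : ℕ} (hp : e (k + N + 1) = -1) (hf : qFactorial e (k + N) ≠ 0)
    (x y : A) :
    ∑ p ∈ antidiagonal N, ∑ q ∈ antidiagonal k,
      e (p.1 * y - p.2 * x + (q.1 * (y + 1) - q.2 * (x + 1))) *
        (qChoose e (k : A) q.1 * qChoose e (N : A) p.1 *
          (qChoose e (x + q.1) (p.1 + q.1) * qChoose e (y + q.2) (p.2 + q.2))) =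
      (-1) ^ k * qChoose e (x + y) (k + N) := by
  have hk := qFactorial_ne_zero_of_le e (Nat.le_add_right k N) hf
  have hN := qFactorial_ne_zero_of_le e (Nat.le_add_left N k) hf
  have hp' : e (N + k + 1) = -1 := by rwa [add_comm (N : A)]
  calc _ = ∑ p ∈ antidiagonal N, ∑ q ∈ antidiagonal k, (-1) ^ k *
        vandermondeTerm e (-y - 1) (-x - 1) q.2 q.1 * vandermondeTerm e x y p.1 p.2 := by
        refine sum_congr rfl fun ⟨t, t'⟩ hpN => sum_congr rfl fun ⟨s, s'⟩ hqk => ?_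
        obtain rfl : t + t' = N := mem_antidiagonal.1 hpN
        obtain rfl : s + s' = k := mem_antidiagonal.1 hqk
        rw [qChoose_natCast_mul_qChoose_add e hp hf, AddChar.map_add_eq_mul,
          show (s : A) * (y + 1) - s' * (x + 1) = s' * (-x - 1) - s * (-y - 1) by ring,
          vandermondeTerm, vandermondeTerm]
        ring
    _ = (-1) ^ k * (∑ q ∈ antidiagonal k, vandermondeTerm e (-y - 1) (-x - 1) q.1 q.2) *
        ∑ p ∈ antidiagonal N, vandermondeTerm e x y p.1 p.2 := by
        rw [mul_assoc, sum_mul_sum, sum_comm, ← Nat.sum_antidiagonal_swap, mul_sum]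
        simp only [mul_sum, mul_assoc, Prod.swap]
    _ = qChoose e (x + y + 1 + k) k * qChoose e (x + y) N := by
        rw [sum_antidiagonal_vandermondeTerm e _ _ hk,
          sum_antidiagonal_vandermondeTerm e _ _ hN, qChoose_reflect e (x + y + 1 + k)]
        ring_nf
    _ = (-1) ^ k * qChoose e (x + y) (k + N) := by
        rw [add_comm k N, qChoose_add e hp', ← mul_left_comm, ← qChoose_add_eq e hp']
        ring_nf

lemma qChoose_add_period {k N : ℕ} (hp : e (k + N + 1) = -1) (z : A) :
    qChoose e (z + (k + N + 1)) (k + N) =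
      (-1) ^ (k + N) * (qChoose e (2 * (k + N) - z) N * qChoose e z k) := by
  have hreflect : qChoose e (z + (k + N + 1) - k) N = (-1) ^ N * qChoose e (-2 - z) N := by
    rw [qChoose_reflect]
    ring_nf
  have hperiod : qChoose e (2 * (k + N) - z) N = qChoose e (-2 - z) N := by
    rw [show 2 * (k + N) - z = -2 - z + (k + N + 1) + (k + N + 1) by ring, qChoose_add_eq e hp,
      qChoose_add_eq e hp, ← mul_assoc, ← mul_pow, neg_one_mul, neg_neg, one_pow, one_mul]
  rw [qChoose_add e hp, qChoose_add_eq e hp, hreflect, hperiod]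
  ring

lemma qChoose_natCast_eq_zero {i m : ℕ} (h : i < m) : qChoose e (i : A) m = 0 := by
  rw [qChoose, qFalling, prod_eq_zero (mem_range.2 h) (by simp [qBracket_zero]), zero_div]

end QuantumBinomial

/-- The additive character `a ↦ ξ^a`. -/
def xiChar (n : ℕ) : AddChar ℂ ℂ where
  toFun := xic n
  map_zero_eq_one' := by simp [xic]
  map_add_eq_mul' x y := by rw [xic, xic, xic, ← Complex.exp_add]; ring_nf

section RootOfUnity

variable {n : ℕ}

lemma xiChar_natCast_self (hn : n ≠ 0) : xiChar n n = -1 := by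
  change Complex.exp (Real.pi * I * n / n) = -1
  rw [mul_div_cancel_right₀ _ (Nat.cast_ne_zero.2 hn), Complex.exp_pi_mul_I]

lemma xiChar_sub_natCast_mul (hn : n ≠ 0) (x : ℂ) (m : ℕ) :
    xiChar n (x - m * n) = (-1) ^ m * xiChar n x := by
  rw [sub_eq_neg_add, AddChar.map_add_eq_mul, AddChar.map_neg_eq_inv, ← nsmul_eq_mul,
    AddChar.map_nsmul_eq_pow, xiChar_natCast_self hn, ← inv_pow, inv_neg_one]

lemma qBracket_xiChar_eq_zero_iff (hn : n ≠ 0) {x : ℂ} :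
    qBracket (xiChar n) x = 0 ↔ ∃ m : ℤ, x = m * n := by
  have hn' : (n : ℂ) ≠ 0 := Nat.cast_ne_zero.2 hn
  have hpi : (Real.pi : ℂ) ≠ 0 := ofReal_ne_zero.2 Real.pi_ne_zero
  change xic n x - xic n (-x) = 0 ↔ _
  rw [sub_eq_zero, xic, xic, Complex.exp_eq_exp_iff_exists_int]
  refine exists_congr fun m => ?_
  field_simp
  constructor <;> intro h
  · linear_combination h / 2
  · linear_combination 2 * h

lemma qFactorial_xiChar_ne_zero {m : ℕ} (hm : m < n) : qFactorial (xiChar n) m ≠ 0 := by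
  refine prod_ne_zero_iff.2 fun j hj h => ?_
  obtain ⟨i, hi⟩ := (qBracket_xiChar_eq_zero_iff (by omega)).1 h
  have hi' : ((j + 1 : ℕ) : ℤ) = i * n := by exact_mod_cast hi
  have := Nat.le_of_dvd j.succ_pos (Int.natCast_dvd_natCast.1 ⟨i, hi'.trans (mul_comm _ _)⟩)
  have := mem_range.1 hj
  omega

lemma qChoose_two_mul_ne_zero {a : ℂ} (ha : NotHalfInt a) {m : ℕ} (hm : m < n) :
    qChoose (xiChar n) (2 * a) m ≠ 0 := by
  refine div_ne_zero (prod_ne_zero_iff.2 fun j _ h => ?_) (qFactorial_xiChar_ne_zero hm)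
  obtain ⟨i, hi⟩ := (qBracket_xiChar_eq_zero_iff (by omega)).1 h
  refine ha (i * n + j) ?_
  push_cast
  linear_combination hi / 2

lemma NotHalfInt.natCast_sub_one_sub {a : ℂ} (ha : NotHalfInt a) :
    NotHalfInt (n - 1 - a) := fun m hm => by
  refine ha (2 * n - 2 - m) ?_
  push_cast
  linear_combination -hm

lemma qbin_eq_qChoose {x y : ℂ} {m : ℕ} (hm : m < n) (h : x - y = m) :
    qbin n x y = qChoose (xiChar n) x m := by
  have hex : ∃ k : ℕ, k < n ∧ x - y = k := ⟨m, hm, h⟩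
  have hchoose : hex.choose = m := by exact_mod_cast hex.choose_spec.2.symm.trans h
  rw [qbin, dif_pos hex, hchoose, h, prod_div_distrib, qChoose, ← qFalling_natCast_self]
  rfl

lemma qbin_natCast_sub_eq_zero {k : ℕ} {i : ℤ} (hi : i < 0 ∨ k < i) :
    qbin n k (k - i) = 0 := by
  by_cases hex : ∃ m : ℕ, m < n ∧ (k : ℂ) - (k - i) = m
  · obtain ⟨m, hm, h⟩ := hex
    have him : i = m := by rw [sub_sub_cancel] at h; exact_mod_cast h
    rw [qbin_eq_qChoose hm h, qChoose_natCast_eq_zero _ (by omega)]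
  · rw [qbin, dif_neg hex]

end RootOfUnity

section ClebschGordan

variable {n : ℕ} {a b c : ℂ}

lemma CG_phase (hn : n ≠ 0) {k : ℕ} (habc : a + b - c = k) (x : ℂ) :
    Complex.exp (Real.pi * I * (c - a - b) / 2) * xic n (x / 2) = xic n ((x - k * n) / 2) := by
  have : (n : ℂ) ≠ 0 := Nat.cast_ne_zero.2 hn
  rw [xic, xic, ← Complex.exp_add, ← habc]
  congr 1
  field_simp
  ring

/-- The range of `z` in the definition of `CG` contains the whole support `t ≤ z ≤ t + k` of
`[a+b-c¦k+t-z]`, so the sum can be reindexed by `q = (z - t, t + k - z)`. -/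
lemma CG_eq_sum_antidiagonal {k N r t t' : ℕ} (h : k + N + 1 = n) (hr : r ≤ N) (ht : t + t' = r)
    (habc : a + b - c = k) :
    CG n a b c (k + t) (k + t') (k + r) =
      (-1) ^ t *
        xic n (((k + t') * (2 * b - (k + t') + 1) - (k + t) * (2 * a - (k + t) + 1) - k * n) / 2) *
        (qChoose (xiChar n) (2 * c) (k + r))⁻¹ * qChoose (xiChar n) (2 * c) N *
        ∑ q ∈ antidiagonal k, (-1) ^ (t + q.1) *
          xic n ((2 * (t + q.1) - (k + r)) * (2 * c - (k + r) + 1) / 2) *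
          qChoose (xiChar n) k q.1 * qChoose (xiChar n) (2 * a - k + q.1) (t + q.1) *
          qChoose (xiChar n) (2 * b - k + q.2) (t' + q.2) := by
  have ht' : (t : ℂ) + t' = r := by exact_mod_cast ht
  have hsign : (-1 : ℂ) ^ (((k + t' : ℕ) : ℤ) - ((k + r : ℕ) : ℤ)) = (-1) ^ t := by
    rw [show ((k + t' : ℕ) : ℤ) - ((k + r : ℕ) : ℤ) = -t by omega, zpow_neg, zpow_natCast,
      ← inv_pow, inv_neg_one]
  rw [CG, sum_range_eq_sum_antidiagonal (k := k) (t := t) (by omega), hsign,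
    mul_comm (Complex.exp _), mul_assoc (_ ^ _), CG_phase (by omega) habc,
    qbin_eq_qChoose (m := k + r) (by omega) (by ring),
    qbin_eq_qChoose (m := N) (by omega) (by rw [← h]; push_cast; linear_combination -habc)]
  · push_cast
    congr 1
    refine sum_congr rfl fun q hq => ?_
    have hqk := mem_antidiagonal.1 hq
    have hqk' : (q.1 : ℂ) + q.2 = k := by exact_mod_cast hqk
    rw [habc, qbin_eq_qChoose (m := q.1) (by omega) (by ring),
      qbin_eq_qChoose (m := t + q.1) (by omega) (by push_cast; ring),
      qbin_eq_qChoose (m := t' + q.2) (by omega) (by push_cast; linear_combination -hqk' - ht')]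
    congr! 2
    · ring_nf
    · linear_combination -hqk' - ht'
  · intro z hz
    rw [habc, show ((k + t : ℕ) : ℂ) - z = k - ((z - t : ℤ) : ℂ) by push_cast; ring,
      qbin_natCast_sub_eq_zero (by omega), mul_zero, zero_mul, zero_mul]

lemma CG_zero_right {k N t t' : ℕ} (h : k + N + 1 = n) (ht : t + t' = N) (habc : a + b - c = N) :
    CG n a b c t t' 0 =
      (-1) ^ t' * xic n ((t' * (2 * b - t' + 1) - t * (2 * a - t + 1) - N * n) / 2) *
        qChoose (xiChar n) (2 * c) k * qChoose (xiChar n) N t := by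
  have ht' : (t : ℂ) + t' = N := by exact_mod_cast ht
  have hsymm : qChoose (xiChar n) (N : ℂ) t' = qChoose (xiChar n) N t := by
    rw [← ht, qChoose_natCast _ (qFactorial_xiChar_ne_zero (by omega)), add_comm,
      qChoose_natCast _ (qFactorial_xiChar_ne_zero (by omega)), mul_comm]
  have hzero : xic n 0 = 1 := (xiChar n).map_zero_eq_one
  rw [CG, qbin_eq_qChoose (m := 0) (by omega) (by simp), qChoose_zero,
    qbin_eq_qChoose (m := k) (by omega) (by rw [← h]; push_cast; linear_combination -habc),
    mul_comm (Complex.exp _), mul_assoc (_ ^ _), CG_phase (by omega) habc,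
    zero_add, sum_range_one, habc, qbin_eq_qChoose (m := t') (by omega)
      (by push_cast; linear_combination -ht'),
    qbin_eq_qChoose (m := 0) (by omega) (by simp), qbin_eq_qChoose (m := 0) (by omega) (by simp),
    hsymm]
  simp [qChoose_zero, hzero]

lemma theta_phase {k N s s' t t' : ℕ} (h : k + N + 1 = n) (hs : s + s' = k) (ht : t + t' = N)
    (habc : a + b - c = k) {x y : ℂ} (hx : x = 2 * b - k) (hy : y = 2 * (n - 1 - c) - k) :
    xic n (((k + t') * (2 * (n - 1 - c) - (k + t') + 1) - (k + t) * (2 * b - (k + t) + 1) -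
          k * n) / 2) *
        xic n ((2 * (t + s) - (k + N)) * (2 * (n - 1 - a) - (k + N) + 1) / 2) *
        xic n ((t' * (2 * (n - 1 - b) - t' + 1) - t * (2 * c - t + 1) - N * n) / 2) =
      (-1) ^ (t + s) * xic n (t * y - t' * x + (s * (y + 1) - s' * (x + 1))) := by
  subst hs ht hx hy h
  have hc : c = a + b - (s + s' : ℕ) := by linear_combination -habc
  refine Eq.trans ?_ (xiChar_sub_natCast_mul (by omega) _ (t + s))
  change xiChar _ _ * xiChar _ _ * xiChar _ _ = _
  rw [← AddChar.map_add_eq_mul, ← AddChar.map_add_eq_mul, hc]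
  congr 1
  push_cast
  ring

lemma CG_mul_CG {k N t t' : ℕ} (h : k + N + 1 = n) (ht : t + t' = N) (habc : a + b - c = k)
    {x y : ℂ} (hx : x = 2 * b - k) (hy : y = 2 * (n - 1 - c) - k) :
    CG n b (n - 1 - c) (n - 1 - a) (k + t) (k + t') (k + N) * CG n c (n - 1 - b) a t t' 0 =
      (-1) ^ N * ((qChoose (xiChar n) (2 * (n - 1 - a)) (k + N))⁻¹ *
        qChoose (xiChar n) (2 * (n - 1 - a)) N * qChoose (xiChar n) (2 * a) k) *
        ∑ q ∈ antidiagonal k, xiChar n (t * y - t' * x + (q.1 * (y + 1) - q.2 * (x + 1))) *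
          (qChoose (xiChar n) k q.1 * qChoose (xiChar n) N t *
            (qChoose (xiChar n) (x + q.1) (t + q.1) *
              qChoose (xiChar n) (y + q.2) (t' + q.2))) := by
  have hN : c + (n - 1 - b) - a = N := by rw [← h]; push_cast; linear_combination -habc
  rw [CG_eq_sum_antidiagonal h le_rfl ht (by linear_combination habc), CG_zero_right h ht hN,
    mul_sum, sum_mul, mul_sum]
  refine sum_congr rfl fun q hq => ?_
  have hphase := theta_phase h (mem_antidiagonal.1 hq) ht habc hx hy
  have hsign : ((-1) ^ (t + q.1) * (-1) ^ (t + q.1) : ℂ) = 1 := by simp [← mul_pow]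
  change _ = _ * _ * (xic n _ * _)
  rw [← hx, ← hy, ← ht, pow_add (-1) t t', ht]
  linear_combination (-1) ^ t * (-1) ^ t' * ((qChoose (xiChar n) (2 * (n - 1 - a)) (k + N))⁻¹ *
    qChoose (xiChar n) (2 * (n - 1 - a)) N * qChoose (xiChar n) (2 * a) k *
    (qChoose (xiChar n) k q.1 * qChoose (xiChar n) N t *
      (qChoose (xiChar n) (x + q.1) (t + q.1) * qChoose (xiChar n) (y + q.2) (t' + q.2)))) *
    ((-1) ^ (t + q.1) * hphase +
      xic n (t * y - t' * x + (q.1 * (y + 1) - q.2 * (x + 1))) * hsign)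

theorem sum_CG_mul_CG (ha : NotHalfInt a) {k N : ℕ} (h : k + N + 1 = n) (habc : a + b - c = k) :
    ∑ p ∈ antidiagonal N,
        CG n b (n - 1 - c) (n - 1 - a) (k + p.1) (k + p.2) (k + N) *
          CG n c (n - 1 - b) a p.1 p.2 0 =
      (-1) ^ (k + N) *
        (qChoose (xiChar n) (2 * (n - 1 - a)) N * qChoose (xiChar n) (2 * a) k) := by
  have hperiod : xiChar n (k + N + 1) = -1 := by
    rw [← xiChar_natCast_self (n := n) (by omega), ← h]
    push_cast
    rfl
  have hne : qChoose (xiChar n) (2 * (n - 1 - a)) (k + N) ≠ 0 :=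
    qChoose_two_mul_ne_zero ha.natCast_sub_one_sub (by omega)
  have hsum := sum_sum_qChoose (xiChar n) hperiod (qFactorial_xiChar_ne_zero (by omega))
    (2 * b - k) (2 * (n - 1 - c) - k)
  rw [show 2 * b - k + (2 * (n - 1 - c) - k) = 2 * (n - 1 - a) by
    linear_combination 2 * habc] at hsum
  rw [sum_congr rfl fun p hp => CG_mul_CG h (mem_antidiagonal.1 hp) habc rfl rfl, ← mul_sum, hsum,
    pow_add]
  field_simp

end ClebschGordan

theorem theta_graph_value_general {n : ℕ} {a b c : ℂ} (ha : NotHalfInt a) {k : ℕ} (hk : k < n)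
    (habc : a + b - c = k) :
    ∑ t ∈ range (n - k),
        CG n b (n - 1 - c) (n - 1 - a) (k + t) (n - 1 - t) (n - 1) *
          CG n c (n - 1 - b) a t (n - 1 - k - t) 0 =
      qbin n (2 * a + n) (2 * a + 1) := by
  obtain ⟨N, hN⟩ : ∃ N, k + N + 1 = n := ⟨n - k - 1, by omega⟩
  have hn : (n : ℂ) = k + N + 1 := by rw [← hN]; push_cast; rfl
  have hperiod : xiChar n (k + N + 1) = -1 := by rw [← hn, xiChar_natCast_self (by omega)]
  calc _ = ∑ p ∈ antidiagonal N,
        CG n b (n - 1 - c) (n - 1 - a) (k + p.1) (k + p.2) (k + N) *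
          CG n c (n - 1 - b) a p.1 p.2 0 := by
        rw [Nat.sum_antidiagonal_eq_sum_range_succ_mk, show n - k = N + 1 by omega]
        refine sum_congr rfl fun t ht => ?_
        have := mem_range.1 ht
        congr 2 <;> omega
    _ = qChoose (xiChar n) (2 * a + n) (k + N) := by
        rw [sum_CG_mul_CG ha hN habc, hn, qChoose_add_period _ hperiod]
        ring_nf
    _ = qbin n (2 * a + n) (2 * a + 1) := by
        rw [qbin_eq_qChoose (m := k + N) (by omega) (by rw [hn]; push_cast; ring)]

theorem theta_graph_value (n : ℕ) (hn : 2 ≤ n) (a b c : ℂ)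
    (ha : NotHalfInt a) (hb : NotHalfInt b) (hc : NotHalfInt c)
    (k : ℕ) (hk : k ≤ n - 1) (habc : a + b - c = (k : ℂ)) :
    ∑ t ∈ Finset.range (n - k),
        CG n b ((n : ℂ) - 1 - c) ((n : ℂ) - 1 - a) (k + t) (n - 1 - t) (n - 1) *
          CG n c ((n : ℂ) - 1 - b) a t (n - 1 - k - t) 0
      = qbin n (2 * a + (n : ℂ)) (2 * a + 1) :=
  theta_graph_value_general ha (by omega) habc

end
end

section
/- Let a, b ∈ ℂ \ (1/2)ℤ with a+b ∉ (1/2)ℤ. Then the identity operator on V^a ⊗ V^b decomposes as id_{V^a ⊗ V^b} = Σ_{k=0}^{n−1} [2(a+b−k)+n ¦ 2(a+b−k)+1]^{−1} · Y_{a+b−k}^{a,b} ∘ Y_{a,b}^{a+b−k}. -/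
open Complex Finset Filter
open scoped Matrix Kronecker Real

noncomputable section

/-!
The recursion of the Clebsch–Gordan coefficients in `t` says that `Y_c^{a,b}` commutes with the
action of `F`, and together with the case `t = 0` it gives the same for `E`. Up to reversing the
bases, `Y_{a,b}^c` is the transpose of the inclusion with weights `n-1-b, n-1-a, n-1-c`, so it is an
intertwiner as well. Hence `Y_{a,b}^{c'} ∘ Y_c^{a,b}` commutes with `E` and `F`; as `e_0` generates
`V^c` under `F` and spans the kernel of `E`, this composite is determined by its `(0, 0)` entry. The
entry vanishes for weight reasons if `c ≠ c'`, and for `c = c'` the quantum Chu–Vandermonde identity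
evaluates it as `[2c+n¦2c+1]`. So the inclusions and the rescaled projections with
`c = a+b, …, a+b-(n-1)` form a one-sided inverse pair between `(ℂ^n)^n` and `V^a ⊗ V^b`, which is
two-sided because both spaces have dimension `n²`.
-/

section QuantumNumbers

variable {n : ℕ}

lemma xic_add (x y : ℂ) : xic n (x + y) = xic n x * xic n y := by
  rw [xic, xic, xic, ← Complex.exp_add]
  ring_nf

lemma xic_zero : xic n 0 = 1 := by simp [xic]

lemma qn_neg (x : ℂ) : qn n (-x) = -qn n x := by simp [qn]

lemma qn_zero : qn n 0 = 0 := by simp [qn]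

lemma qn_add (x y : ℂ) : qn n (x + y) = xic n x * qn n y + xic n (-y) * qn n x := by
  simp only [qn, neg_add, xic_add]
  ring

lemma qn_add_one_mul_qn_sub_sub (x y : ℂ) :
    qn n (x + 1) * qn n (y - x) - qn n x * qn n (y - x + 1) = qn n 1 * qn n (y - 2 * x) := by
  simp only [qn, mul_sub, sub_mul, ← xic_add]
  ring_nf

section NeZero

variable [NeZero n]

lemma xic_natCast_mul_intCast (m : ℤ) : xic n (n * m) = (-1) ^ m := by
  have hn : (n : ℂ) ≠ 0 := NeZero.ne _
  rw [xic, ← Complex.exp_pi_mul_I, ← Complex.exp_int_mul]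
  congr 1
  field_simp

lemma xic_natCast_mul_natCast (m : ℕ) : xic n (n * m) = (-1) ^ m := by
  simpa using xic_natCast_mul_intCast (n := n) m

lemma xic_self : xic n n = -1 := by
  simpa using xic_natCast_mul_natCast (n := n) 1

lemma xic_neg_self : xic n (-n) = -1 := by
  simpa using xic_natCast_mul_intCast (n := n) (-1)

lemma qn_self_add (x : ℂ) : qn n (n + x) = -qn n x := by
  simp only [qn, neg_add, xic_add, xic_self, xic_neg_self]
  ring

lemma qn_self_sub (x : ℂ) : qn n (n - x) = qn n x := by
  rw [sub_eq_add_neg, qn_self_add, qn_neg, neg_neg]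

lemma qn_self : qn n n = 0 := by
  simpa [qn_zero] using qn_self_sub (n := n) 0

lemma qn_eq_zero_iff (x : ℂ) : qn n x = 0 ↔ ∃ m : ℤ, x = n * m := by
  have hn : (n : ℂ) ≠ 0 := NeZero.ne _
  have hsin : qn n x = 2 * I * Complex.sin (π * x / n) := by
    rw [qn, xic, xic, Complex.sin]
    ring_nf
    simp only [I_sq]
    ring
  have hpi : (π : ℂ) ≠ 0 := ofReal_ne_zero.2 Real.pi_ne_zero
  simp only [hsin, mul_eq_zero, OfNat.ofNat_ne_zero, I_ne_zero, false_or, Complex.sin_eq_zero_iff]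
  refine exists_congr fun m => ?_
  rw [div_eq_iff hn, mul_right_comm, mul_comm _ (π : ℂ), mul_right_inj' hpi, mul_comm (m : ℂ)]

lemma NotHalfInt.qn_ne_zero {c : ℂ} (hc : NotHalfInt c) (m : ℤ) : qn n (2 * c + m) ≠ 0 := by
  rw [Ne, qn_eq_zero_iff]
  rintro ⟨l, hl⟩
  refine hc (n * l - m) ?_
  push_cast
  linear_combination hl / 2

end NeZero

lemma qn_natCast_ne_zero {m : ℕ} (h0 : 0 < m) (hm : m < n) : qn n m ≠ 0 := by
  have : NeZero n := ⟨by lia⟩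
  rw [Ne, qn_eq_zero_iff]
  rintro ⟨l, hl⟩
  have hdvd : (n : ℤ) ∣ m := ⟨l, mod_cast hl⟩
  exact hm.not_ge (Nat.le_of_dvd h0 (Int.natCast_dvd_natCast.1 hdvd))

lemma qn_one_ne_zero [n.AtLeastTwo] : qn n 1 ≠ 0 := by
  simpa using qn_natCast_ne_zero one_pos (Nat.AtLeastTwo.one_lt (n := n))

/-- The rising quantum factorial `{x}{x+1}⋯{x+m-1}`, which is `{x+m-1, x-1}` in the notation
`{a, a-k}` of the paper. -/
def qrise (n : ℕ) (x : ℂ) (m : ℕ) : ℂ := ∏ j ∈ range m, qn n (x + j)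

lemma qrise_zero (x : ℂ) : qrise n x 0 = 1 := prod_range_zero _

lemma qrise_succ (x : ℂ) (m : ℕ) : qrise n x (m + 1) = qrise n x m * qn n (x + m) :=
  prod_range_succ _ _

lemma qrise_add (x : ℂ) (m l : ℕ) : qrise n x (m + l) = qrise n x m * qrise n (x + m) l := by
  simp only [qrise, prod_range_add, Nat.cast_add, add_assoc]

lemma qrise_succ' (x : ℂ) (m : ℕ) : qrise n x (m + 1) = qn n x * qrise n (x + 1) m := by
  rw [add_comm, qrise_add, qrise_succ, qrise_zero, Nat.cast_zero, add_zero, one_mul, Nat.cast_one]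

lemma qrise_one (m : ℕ) : qrise n 1 m = qfac n m := by
  simp only [qrise, qfac, add_comm]

lemma qfac_zero : qfac n 0 = 1 := prod_range_zero _

lemma qfac_succ (m : ℕ) : qfac n (m + 1) = qfac n m * qn n (m + 1) := prod_range_succ _ _

lemma qfac_mul_qrise (i j : ℕ) : qfac n i * qrise n (i + 1) j = qfac n (i + j) := by
  rw [← qrise_one, ← qrise_one, qrise_add, add_comm (1 : ℂ)]

lemma qfac_ne_zero {m : ℕ} (hm : m < n) : qfac n m ≠ 0 := by
  refine prod_ne_zero_iff.2 fun j hj => ?_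
  exact mod_cast qn_natCast_ne_zero j.succ_pos (by grind)

section NeZero

variable [NeZero n]

lemma qrise_self_add (x : ℂ) (m : ℕ) : qrise n (n + x) m = (-1) ^ m * qrise n x m := by
  simp only [qrise, add_assoc, qn_self_add, prod_neg, card_range]

lemma qrise_reflect {x y : ℂ} {m : ℕ} (h : x + y + m = n + 1) : qrise n x m = qrise n y m := by
  rw [qrise, ← prod_range_reflect]
  refine prod_congr rfl fun j hj => ?_
  have hj : j + 1 ≤ m := by simpa using hj
  rw [← qn_self_sub, Nat.sub_sub, add_comm 1, Nat.cast_sub hj]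
  congr 1
  push_cast
  linear_combination -h

lemma qrise_reflect' {x y : ℂ} {m : ℕ} (h : x + y + m = 2 * n + 1) :
    qrise n x m = (-1) ^ m * qrise n y m := by
  have hy := qrise_self_add (n := n) (y - n) m
  rw [add_sub_cancel] at hy
  rw [hy, ← mul_assoc, ← mul_pow, neg_one_mul, neg_neg, one_pow, one_mul]
  exact qrise_reflect (by linear_combination h)

lemma qfac_mul_qfac {i j : ℕ} (h : i + j + 1 = n) : qfac n i * qfac n j = qfac n (i + j) := by
  have hn : (n : ℂ) = i + j + 1 := mod_cast h.symm
  rw [← qfac_mul_qrise, ← qrise_one j, qrise_reflect (x := 1) (y := i + 1)]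
  rw [hn]
  ring

lemma qfac_self : qfac n n = 0 := by
  obtain ⟨m, rfl⟩ := Nat.exists_eq_succ_of_ne_zero (NeZero.ne n)
  rw [qfac_succ, ← Nat.cast_succ, qn_self, mul_zero]

lemma NotHalfInt.qrise_ne_zero {c : ℂ} (hc : NotHalfInt c) (m : ℤ) (k : ℕ) :
    qrise n (2 * c + m) k ≠ 0 := by
  refine prod_ne_zero_iff.2 fun j _ => ?_
  simpa [add_assoc] using hc.qn_ne_zero (n := n) (m + j)

end NeZero

lemma qbin_eq_div {x y : ℂ} {k : ℕ} (hk : k < n) (h : x = y + k) :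
    qbin n x y = qrise n (y + 1) k / qfac n k := by
  have hex : ∃ m : ℕ, m < n ∧ x - y = m := ⟨k, hk, by rw [h]; ring⟩
  have hchoose : hex.choose = k := by
    exact_mod_cast hex.choose_spec.2.symm.trans (sub_eq_iff_eq_add'.2 h)
  rw [qbin, dif_pos hex, hchoose, prod_div_distrib, qrise, qfac, ← prod_range_reflect,
    ← prod_range_reflect (fun j : ℕ => qn n ((j : ℂ) + 1))]
  congr 1 <;> refine prod_congr rfl fun j hj => ?_ <;>
  · have hj : j + 1 ≤ k := by simpa using hj
    rw [Nat.sub_sub, add_comm 1, Nat.cast_sub hj, h]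
    congr 1
    push_cast
    ring

lemma qbin_natCast_intCast_eq_zero {k : ℕ} {m : ℤ} (h : m < 0 ∨ k < m) : qbin n k m = 0 := by
  rcases h with h | h
  · by_cases hex : ∃ l : ℕ, l < n ∧ (k : ℂ) - m = l
    · have hl : (k : ℤ) - m = hex.choose := mod_cast hex.choose_spec.2
      rw [qbin, dif_pos hex]
      refine prod_eq_zero (mem_range.2 (show k < hex.choose by lia)) ?_
      rw [sub_self, qn_zero, zero_div]
    · rw [qbin, dif_neg hex]
  · rw [qbin, dif_neg]
    rintro ⟨l, -, hl⟩
    have : (k : ℤ) - m = l := mod_cast hl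
    lia

end QuantumNumbers

section GaussianBinomials

variable {n : ℕ}

/-- The Gaussian binomial coefficient `{i+j}!/({i}!{j}!)` in its symmetric normalization. It is
defined through the quantum Pascal rule, so that it also makes sense for `i + j ≥ n`, where the
factorials in the quotient vanish. -/
def gaussBinom (n : ℕ) : ℕ → ℕ → ℂ
  | 0, _ => 1
  | _ + 1, 0 => 1
  | i + 1, j + 1 =>
    xic n (i + 1) * gaussBinom n (i + 1) j + xic n (-(j + 1)) * gaussBinom n i (j + 1)

lemma gaussBinom_zero_left (j : ℕ) : gaussBinom n 0 j = 1 := by rw [gaussBinom]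

lemma gaussBinom_zero_right (i : ℕ) : gaussBinom n i 0 = 1 := by cases i <;> rw [gaussBinom]

lemma gaussBinom_succ_succ (i j : ℕ) : gaussBinom n (i + 1) (j + 1) =
    xic n (i + 1) * gaussBinom n (i + 1) j + xic n (-(j + 1)) * gaussBinom n i (j + 1) := by
  rw [gaussBinom]

lemma gaussBinom_mul_qfac_mul_qfac (i j : ℕ) :
    gaussBinom n i j * (qfac n i * qfac n j) = qfac n (i + j) := by
  induction i, j using gaussBinom.induct with
  | case1 j => rw [gaussBinom_zero_left, qfac_zero, zero_add, one_mul, one_mul]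
  | case2 i => rw [gaussBinom_zero_right, qfac_zero, add_zero, one_mul, mul_one]
  | case3 i j ih₁ ih₂ =>
    have hqn := qn_add (n := n) (i + 1) (j + 1)
    have hcast : ((i + j + 1 : ℕ) : ℂ) + 1 = i + 1 + (j + 1) := by push_cast; ring
    rw [gaussBinom_succ_succ, qfac_succ i, qfac_succ j,
      show i + 1 + (j + 1) = i + j + 1 + 1 by ring, qfac_succ (i + j + 1), hcast, hqn]
    rw [qfac_succ i, show i + 1 + j = i + j + 1 by ring] at ih₁
    rw [qfac_succ j, ← add_assoc] at ih₂
    linear_combination xic n (i + 1) * qn n (j + 1) * ih₁ + xic n (-(j + 1)) * qn n (i + 1) * ih₂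

lemma gaussBinom_eq_div {i j : ℕ} (h : i + j < n) :
    gaussBinom n i j = qfac n (i + j) / (qfac n i * qfac n j) := by
  have hi : qfac n i ≠ 0 := qfac_ne_zero (by lia)
  have hj : qfac n j ≠ 0 := qfac_ne_zero (by lia)
  rw [eq_div_iff (mul_ne_zero hi hj), gaussBinom_mul_qfac_mul_qfac]

lemma gaussBinom_eq_one {i j : ℕ} (h : i + j + 1 = n) : gaussBinom n i j = 1 := by
  have : NeZero n := ⟨by lia⟩
  rw [gaussBinom_eq_div (by lia), qfac_mul_qfac h, div_self (qfac_ne_zero (by lia))]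

lemma gaussBinom_eq_zero {i j : ℕ} (h : i + j = n) (hi : i ≠ 0) (hj : j ≠ 0) :
    gaussBinom n i j = 0 := by
  have : NeZero n := ⟨by lia⟩
  have hmul := gaussBinom_mul_qfac_mul_qfac (n := n) i j
  rw [h, qfac_self] at hmul
  exact (mul_eq_zero.1 hmul).resolve_right
    (mul_ne_zero (qfac_ne_zero (by lia)) (qfac_ne_zero (by lia)))

lemma qbin_natCast_eq_gaussBinom {i j : ℕ} (h : i + j < n) :
    qbin n (i + j : ℕ) i = gaussBinom n i j := by
  have hi : qfac n i ≠ 0 := qfac_ne_zero (by lia)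
  rw [qbin_eq_div (k := j) (by lia) (by push_cast; rfl), gaussBinom_eq_div h, ← qfac_mul_qrise,
    mul_div_mul_left _ _ hi]

lemma sum_antidiagonal_succ_gaussBinom_mul (f : ℕ → ℕ → ℂ) (k : ℕ) :
    ∑ p ∈ antidiagonal (k + 1), gaussBinom n p.1 p.2 * f p.1 p.2 =
      ∑ p ∈ antidiagonal k, gaussBinom n p.1 p.2 *
        (xic n p.1 * f p.1 (p.2 + 1) + xic n (-p.2) * f (p.1 + 1) p.2) := by
  simp only [mul_add, sum_add_distrib]
  cases k with
  | zero =>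
    simp [Nat.sum_antidiagonal_succ, gaussBinom_zero_left, gaussBinom_zero_right, xic_zero]
  | succ k =>
    have hpascal (p : ℕ × ℕ) : gaussBinom n (p.1 + 1) (p.2 + 1) * f (p.1 + 1) (p.2 + 1) =
        gaussBinom n (p.1 + 1) p.2 * (xic n (p.1 + 1 : ℕ) * f (p.1 + 1) (p.2 + 1)) +
          gaussBinom n p.1 (p.2 + 1) * (xic n (-(p.2 + 1 : ℕ)) * f (p.1 + 1) (p.2 + 1)) := by
      rw [gaussBinom_succ_succ]
      push_cast
      ring
    rw [Nat.sum_antidiagonal_succ, Nat.sum_antidiagonal_succ',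
      Nat.sum_antidiagonal_succ (n := k), Nat.sum_antidiagonal_succ' (n := k)]
    simp only [hpascal, sum_add_distrib, gaussBinom_zero_left, gaussBinom_zero_right,
      Nat.cast_zero, neg_zero, xic_zero]
    ring

lemma sum_antidiagonal_gaussBinom_mul_qrise (x y : ℂ) (k : ℕ) :
    ∑ p ∈ antidiagonal k, gaussBinom n p.1 p.2 *
        (xic n (p.2 * x - p.1 * y) * qrise n x p.1 * qrise n y p.2) =
      qrise n (x + y) k := by
  induction k with
  | zero => simp [gaussBinom_zero_left, xic_zero, qrise_zero]
  | succ k ih =>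
    rw [sum_antidiagonal_succ_gaussBinom_mul
      (fun i j => xic n (j * x - i * y) * qrise n x i * qrise n y j), qrise_succ, ← ih, sum_mul]
    refine sum_congr rfl fun ⟨i, j⟩ hp => ?_
    obtain rfl : i + j = k := mem_antidiagonal.1 hp
    have hqn := qn_add (n := n) (x + i) (y + j)
    rw [add_add_add_comm, ← Nat.cast_add] at hqn
    have hleft : xic n i * xic n ((j + 1 : ℕ) * x - i * y) =
        xic n (j * x - i * y) * xic n (x + i) := by
      simp only [← xic_add]
      push_cast
      ring_nf
    have hright : xic n (-j) * xic n (j * x - (i + 1 : ℕ) * y) =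
        xic n (j * x - i * y) * xic n (-(y + j)) := by
      simp only [← xic_add]
      push_cast
      ring_nf
    simp only [hqn, qrise_succ]
    linear_combination gaussBinom n i j * qrise n x i * qrise n y j *
      (qn n (y + j) * hleft + qn n (x + i) * hright)

end GaussianBinomials

section ClebschGordan

variable {n k : ℕ} {a b c : ℂ}

/-- The sum in the Clebsch–Gordan coefficient `C^{a,b,c}_{u,v,t}` multiplied by `{t}!`, where
`a + b - c = k`. The indices `u` and `v` are complex so that `u - 1` and `v - 1` make sense at the
boundary, and the signs are absorbed into powers of `ξ` through `ξ^n = -1`. -/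
def cgNum (n k : ℕ) (a b c u v : ℂ) (t : ℕ) : ℂ :=
  ∑ p ∈ antidiagonal t, gaussBinom n p.1 p.2 *
    (xic n (n * p.1 + (p.1 - p.2) * (2 * c - t + 1) / 2) * qbin n k (u - p.1) *
      qrise n (2 * a - u + 1) p.1 * qrise n (2 * b - v + 1) p.2)

lemma cgNum_succ (a b c u v : ℂ) (t : ℕ) :
    cgNum n k a b c u v (t + 1) =
      xic n (-(c - t)) * qn n (2 * b - v + 1) * cgNum n k a b c u (v - 1) t +
        xic n (n + c - t) * qn n (2 * a - u + 1) * cgNum n k a b c (u - 1) v t := by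
  have hsum := sum_antidiagonal_succ_gaussBinom_mul (n := n) (fun i j =>
    xic n (n * i + (i - j) * (2 * c - (t + 1 : ℕ) + 1) / 2) * qbin n k (u - i) *
      qrise n (2 * a - u + 1) i * qrise n (2 * b - v + 1) j) t
  rw [cgNum, hsum, cgNum, cgNum, mul_sum, mul_sum, ← sum_add_distrib]
  refine sum_congr rfl fun ⟨i, j⟩ hp => ?_
  obtain rfl : i + j = t := mem_antidiagonal.1 hp
  have hright : xic n i *
      xic n (n * i + (i - (j + 1 : ℕ)) * (2 * c - (i + j + 1 : ℕ) + 1) / 2) =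
        xic n (-(c - (i + j : ℕ))) * xic n (n * i + (i - j) * (2 * c - (i + j : ℕ) + 1) / 2) := by
    simp only [← xic_add]
    push_cast
    ring_nf
  have hleft : xic n (-j) *
      xic n (n * (i + 1 : ℕ) + ((i + 1 : ℕ) - j) * (2 * c - (i + j + 1 : ℕ) + 1) / 2) =
        xic n (n + c - (i + j : ℕ)) *
          xic n (n * i + (i - j) * (2 * c - (i + j : ℕ) + 1) / 2) := by
    simp only [← xic_add]
    push_cast
    ring_nf
  have hu : u - (i + 1 : ℕ) = u - 1 - i := by push_cast; ring
  simp only [qrise_succ', hu, show 2 * a - (u - 1) + 1 = 2 * a - u + 1 + 1 by ring,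
    show 2 * b - (v - 1) + 1 = 2 * b - v + 1 + 1 by ring]
  linear_combination gaussBinom n i j *
    (qbin n k (u - i) * qrise n (2 * a - u + 1) i * qn n (2 * b - v + 1) *
        qrise n (2 * b - v + 1 + 1) j * hright +
      qbin n k (u - 1 - i) * qn n (2 * a - u + 1) * qrise n (2 * a - u + 1 + 1) i *
        qrise n (2 * b - v + 1) j * hleft)

lemma cgNum_neg_one (a b c v : ℂ) (t : ℕ) : cgNum n k a b c (-1) v t = 0 := by
  refine sum_eq_zero fun p _ => ?_
  have hqbin := qbin_natCast_intCast_eq_zero (n := n) (k := k) (m := -1 - p.1) (by lia)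
  push_cast at hqbin
  simp only [hqbin, mul_zero, zero_mul]

lemma cgNum_natCast_eq_zero {u t : ℕ} (h : k + t < u) (a b c v : ℂ) :
    cgNum n k a b c u v t = 0 := by
  refine sum_eq_zero fun p hp => ?_
  have hqbin := qbin_natCast_intCast_eq_zero (n := n) (k := k) (m := u - p.1) <|
    .inr (by have := mem_antidiagonal.1 hp; lia)
  push_cast at hqbin
  simp only [hqbin, mul_zero, zero_mul]

lemma cgNum_self_eq_zero {u : ℕ} (hk : k < u) (hn : u < n) (a b c v : ℂ) :
    cgNum n k a b c u v n = 0 := by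
  refine sum_eq_zero fun p hp => ?_
  have hp : p.1 + p.2 = n := mem_antidiagonal.1 hp
  by_cases hgauss : p.1 ≠ 0 ∧ p.2 ≠ 0
  · rw [gaussBinom_eq_zero hp hgauss.1 hgauss.2, zero_mul]
  have hqbin := qbin_natCast_intCast_eq_zero (n := n) (k := k) (m := u - p.1) (by lia)
  push_cast at hqbin
  simp only [hqbin, mul_zero, zero_mul]

open Classical in
/-- The Clebsch–Gordan coefficient `C^{a,b,c}_{u,v,t}` for `a + b - c = k`, with complex weights
`u` and `v`, extended by zero outside the support `u + v - t = k`. -/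
def cgCoeff (n k : ℕ) (a b c u v : ℂ) (t : ℕ) : ℂ :=
  if u + v - t = k then
    xic n (-(n * k) / 2) * qbin n (2 * c) (2 * c + k - (n - 1)) *
      xic n (n * (v - t) + (v * (2 * b - v + 1) - u * (2 * a - u + 1)) / 2) /
        qrise n (2 * c - t + 1) t * cgNum n k a b c u v t
  else 0

lemma cgCoeff_of_ne {u v : ℂ} {t : ℕ} (h : u + v - t ≠ k) : cgCoeff n k a b c u v t = 0 :=
  if_neg h

lemma cgCoeff_of_eq {u v : ℂ} {t : ℕ} (h : u + v - t = k) :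
    cgCoeff n k a b c u v t =
      xic n (-(n * k) / 2) * qbin n (2 * c) (2 * c + k - (n - 1)) *
        xic n (n * (v - t) + (v * (2 * b - v + 1) - u * (2 * a - u + 1)) / 2) /
          qrise n (2 * c - t + 1) t * cgNum n k a b c u v t :=
  if_pos h

lemma CG_eq_cgCoeff [NeZero n] (hc : a + b - c = k) {u v t : ℕ} (ht : t < n)
    (h : (u : ℂ) + v - t = k) : CG n a b c u v t = cgCoeff n k a b c u v t := by
  have hn : (n : ℂ) ≠ 0 := NeZero.ne _
  have hphase : Complex.exp (π * I * (c - a - b) / 2) = xic n (-(n * k) / 2) := by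
    rw [xic, ← hc]
    congr 1
    field_simp
    ring
  have hsign : (-1 : ℂ) ^ ((v : ℤ) - t) = xic n (n * (v - t)) := by
    rw [← xic_natCast_mul_intCast (n := n)]
    push_cast
    rfl
  have hnum : qfac n t * (∑ z ∈ range (t + 1),
      (-1 : ℂ) ^ z * xic n ((2 * z - t) * (2 * c - t + 1) / 2) * qbin n k (u - z) *
        qbin n (2 * a - u + z) (2 * a - u) * qbin n (2 * b - v + (t - z)) (2 * b - v)) =
      cgNum n k a b c u v t := by
    rw [cgNum, Finset.Nat.sum_antidiagonal_eq_sum_range_succ_mk, mul_sum]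
    refine sum_congr rfl fun z hz => ?_
    obtain ⟨w, rfl⟩ := Nat.exists_eq_add_of_le (Nat.le_of_lt_succ (mem_range.1 hz))
    have hz : qfac n z ≠ 0 := qfac_ne_zero (by lia)
    have hw : qfac n w ≠ 0 := qfac_ne_zero (by lia)
    rw [qbin_eq_div (x := 2 * a - u + z) (k := z) (by lia) rfl,
      qbin_eq_div (x := 2 * b - v + ((z + w : ℕ) - z)) (k := w) (by lia) (by push_cast; ring),
      ← xic_natCast_mul_natCast (n := n), ← xic_add, ← gaussBinom_mul_qfac_mul_qfac]
    simp only [Nat.add_sub_cancel_left]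
    field_simp
    push_cast
    ring_nf
  rw [CG, cgCoeff_of_eq h, ← hnum, hphase, hsign, hc, xic_add (n * (v - t)),
    qbin_eq_div (x := 2 * c) (y := 2 * c - t) ht (by ring), inv_div,
    show a + b + c - (n - 1) = 2 * c + k - (n - 1) by linear_combination hc]
  ring

lemma qn_mul_cgCoeff_succ [NeZero n] (hcn : NotHalfInt c) (hc : a + b - c = k) (u v : ℂ) (t : ℕ) :
    qn n (2 * c - t) * cgCoeff n k a b c u v (t + 1) =
      qn n (2 * a - u + 1) * xic n (b - v) * cgCoeff n k a b c (u - 1) v t +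
        xic n (-(a - u)) * qn n (2 * b - v + 1) * cgCoeff n k a b c u (v - 1) t := by
  by_cases h : u + v - (t + 1 : ℕ) = k
  · have hq : qn n (2 * c - t) ≠ 0 := by simpa [sub_eq_add_neg] using hcn.qn_ne_zero (-t : ℤ)
    have h' : u + v - (t + 1) = k := mod_cast h
    have hinv : qn n (2 * c - t) * (qrise n (2 * c - (t + 1 : ℕ) + 1) (t + 1))⁻¹ =
        (qrise n (2 * c - t + 1) t)⁻¹ := by
      rw [Nat.cast_succ, sub_add_eq_sub_sub, sub_add_cancel, qrise_succ', mul_inv,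
        mul_inv_cancel_left₀ hq]
    have hleft : xic n (n * (v - (t + 1 : ℕ)) +
          (v * (2 * b - v + 1) - u * (2 * a - u + 1)) / 2) * xic n (n + c - t) =
        xic n (b - v) * xic n (n * (v - t) +
          (v * (2 * b - v + 1) - (u - 1) * (2 * a - (u - 1) + 1)) / 2) := by
      rw [← xic_add, ← xic_add]
      congr 1
      push_cast
      linear_combination h' - hc
    have hright : xic n (n * (v - (t + 1 : ℕ)) +
          (v * (2 * b - v + 1) - u * (2 * a - u + 1)) / 2) * xic n (-(c - t)) =
        xic n (-(a - u)) * xic n (n * (v - 1 - t) +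
          ((v - 1) * (2 * b - (v - 1) + 1) - u * (2 * a - u + 1)) / 2) := by
      rw [← xic_add, ← xic_add]
      congr 1
      push_cast
      linear_combination -h' + hc
    rw [cgCoeff_of_eq h, cgCoeff_of_eq (by linear_combination h'),
      cgCoeff_of_eq (by linear_combination h'), cgNum_succ]
    linear_combination xic n (-(n * k) / 2) * qbin n (2 * c) (2 * c + k - (n - 1)) *
      (xic n (n * (v - (t + 1 : ℕ)) + (v * (2 * b - v + 1) - u * (2 * a - u + 1)) / 2) *
          (xic n (-(c - t)) * qn n (2 * b - v + 1) * cgNum n k a b c u (v - 1) t +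
            xic n (n + c - t) * qn n (2 * a - u + 1) * cgNum n k a b c (u - 1) v t) * hinv +
        (qrise n (2 * c - t + 1) t)⁻¹ *
          (qn n (2 * a - u + 1) * cgNum n k a b c (u - 1) v t * hleft +
            qn n (2 * b - v + 1) * cgNum n k a b c u (v - 1) t * hright))
  · have h₁ : u - 1 + v - t ≠ k := fun h' => h (by push_cast; linear_combination h')
    have h₂ : u + (v - 1) - t ≠ k := fun h' => h (by push_cast; linear_combination h')
    rw [cgCoeff_of_ne h, cgCoeff_of_ne h₁, cgCoeff_of_ne h₂]
    ring

lemma cgCoeff_zero (hk : k < n) {i j : ℕ} (h : i + j = k) :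
    cgCoeff n k a b c i j 0 =
      xic n (-(n * k) / 2) * qbin n (2 * c) (2 * c + k - (n - 1)) *
        xic n (n * j + (j * (2 * b - j + 1) - i * (2 * a - i + 1)) / 2) * gaussBinom n i j := by
  have h' : (i : ℂ) + j - (0 : ℕ) = k := by simp [← h]
  rw [cgCoeff_of_eq h', qrise_zero, div_one, cgNum]
  simp [gaussBinom_zero_left, xic_zero, qrise_zero, ← h,
    ← qbin_natCast_eq_gaussBinom (h.trans_lt hk)]

lemma cgCoeff_neg_one_left (v : ℂ) (t : ℕ) : cgCoeff n k a b c (-1) v t = 0 := by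
  by_cases h : -1 + v - t = k
  · rw [cgCoeff_of_eq h, cgNum_neg_one, mul_zero]
  · exact cgCoeff_of_ne h

lemma cgCoeff_neg_one_right (u : ℂ) (t : ℕ) : cgCoeff n k a b c u (-1) t = 0 := by
  by_cases h : u + -1 - t = k
  · obtain rfl : u = (k + t + 1 : ℕ) := by push_cast; linear_combination h
    rw [cgCoeff_of_eq h, cgNum_natCast_eq_zero (Nat.lt_succ_self _), mul_zero]
  · exact cgCoeff_of_ne h

lemma cgCoeff_self {u v : ℕ} (hu : u < n) (hv : v < n) : cgCoeff n k a b c u v n = 0 := by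
  by_cases h : (u : ℂ) + v - n = k
  · have h' : u + v = k + n := mod_cast sub_eq_iff_eq_add.1 h
    rw [cgCoeff_of_eq h, cgNum_self_eq_zero (by lia) hu, mul_zero]
  · exact cgCoeff_of_ne h

lemma qn_mul_cgCoeff_zero_add [NeZero n] (hk : k < n) (i j : ℕ) :
    qn n (i + 1) * xic n (b - j) * cgCoeff n k a b c (i + 1) j 0 +
      xic n (-(a - i)) * qn n (j + 1) * cgCoeff n k a b c i (j + 1) 0 = 0 := by
  by_cases h : i + j + 1 = k
  · have hi := cgCoeff_zero (a := a) (b := b) (c := c) hk (i := i + 1) (j := j) (by lia)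
    have hj := cgCoeff_zero (a := a) (b := b) (c := c) hk (i := i) (j := j + 1) (by lia)
    push_cast at hi hj
    have hphase : xic n (b - j) * xic n (n * j +
          (j * (2 * b - j + 1) - (i + 1) * (2 * a - (i + 1) + 1)) / 2) =
        -(xic n (-(a - i)) * xic n (n * (j + 1) +
          ((j + 1) * (2 * b - (j + 1) + 1) - i * (2 * a - i + 1)) / 2)) := by
      rw [← neg_one_mul, ← xic_neg_self (n := n), ← xic_add, ← xic_add, ← xic_add]
      congr 1
      ring
    have hgauss : qn n (i + 1) * gaussBinom n (i + 1) j =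
        qn n (j + 1) * gaussBinom n i (j + 1) := by
      have hi := gaussBinom_mul_qfac_mul_qfac (n := n) (i + 1) j
      have hj := gaussBinom_mul_qfac_mul_qfac (n := n) i (j + 1)
      rw [qfac_succ, add_right_comm] at hi
      rw [qfac_succ, ← add_assoc, ← hi] at hj
      refine mul_right_cancel₀ (mul_ne_zero (qfac_ne_zero (show i < n by lia))
        (qfac_ne_zero (show j < n by lia))) ?_
      linear_combination -hj
    rw [hi, hj]
    linear_combination xic n (-(n * k) / 2) * qbin n (2 * c) (2 * c + k - (n - 1)) *
      (qn n (i + 1) * gaussBinom n (i + 1) j * hphase - xic n (-(a - i)) * xic n (n * (j + 1) +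
          ((j + 1) * (2 * b - (j + 1) + 1) - i * (2 * a - i + 1)) / 2) * hgauss)
  · have h₁ : (i : ℂ) + 1 + j - (0 : ℕ) ≠ k := fun h' => h (by
      rw [Nat.cast_zero, sub_zero] at h'; norm_cast at h'; lia)
    have h₂ : (i : ℂ) + (j + 1) - (0 : ℕ) ≠ k := fun h' => h (by
      rw [Nat.cast_zero, sub_zero] at h'; norm_cast at h')
    rw [cgCoeff_of_ne h₁, cgCoeff_of_ne h₂, mul_zero, mul_zero, add_zero]

end ClebschGordan

section Representations

variable {n : ℕ}

lemma matrix_ext_of_mulVec_natCast {m : Type*} {M N : Matrix m (Fin n) ℂ}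
    (h : ∀ g : ℂ → ℂ, g (-1) = 0 →
      (M *ᵥ fun j => g (j : ℕ)) = N *ᵥ fun j => g (j : ℕ)) : M = N := by
  refine Matrix.ext_of_mulVec_single fun j => ?_
  have hsingle :
      (fun i : Fin n => (Pi.single ((j : ℕ) : ℂ) 1 : ℂ → ℂ) (i : ℕ)) = Pi.single j 1 := by
    ext i
    simp [Pi.single_apply, Fin.ext_iff]
  rw [← hsingle]
  refine h _ (Pi.single_eq_of_ne ?_ _)
  exact_mod_cast (by lia : (-1 : ℤ) ≠ (j : ℕ))

lemma kronecker_mulVec_apply {l m l' m' : Type*} [Fintype m] [Fintype m'] (A : Matrix l m ℂ)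
    (B : Matrix l' m' ℂ) (g : m → m' → ℂ) (p : l × l') :
    ((A ⊗ₖ B) *ᵥ fun q => g q.1 q.2) p = (A *ᵥ fun i => (B *ᵥ g i) p.2) p.1 := by
  simp [Matrix.mulVec, dotProduct, Fintype.sum_prod_type, mul_sum, mul_assoc]

lemma Kmat_eq_diagonal (a : ℂ) : Kmat n a = .diagonal fun i => xic n (a - (i : ℕ)) := rfl

lemma Kinvmat_eq_diagonal (a : ℂ) : Kinvmat n a = .diagonal fun i => xic n (-(a - (i : ℕ))) := rfl

/-- The Cartan element `[2 log_ξ K]` on `V^a`, whose value on `e_i` is `[2(a-i)]`. -/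
def Hmat (n : ℕ) (a : ℂ) : Matrix (Fin n) (Fin n) ℂ := .diagonal fun i => qint n (2 * (a - (i : ℕ)))

lemma Fmat_mulVec (a : ℂ) {g : ℂ → ℂ} (hg : g (-1) = 0) :
    (Fmat n a *ᵥ fun j => g (j : ℕ)) =
      fun i : Fin n => qint n (2 * a - (i : ℕ) + 1) * g ((i : ℕ) - 1) := by
  ext ⟨i, hi⟩
  simp only [Matrix.mulVec, dotProduct, Fmat, Matrix.of_apply, ite_mul, zero_mul]
  cases i with
  | zero => simp [hg]
  | succ i =>
    rw [sum_eq_single ⟨i, by lia⟩ (fun j _ hj => if_neg (by grind)) (by simp)]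
    simp only [if_true]
    push_cast
    ring_nf

lemma Emat_mulVec (g : ℂ → ℂ) :
    (Emat n *ᵥ fun j => g (j : ℕ)) = fun i : Fin n => qint n ((i : ℕ) + 1) * g ((i : ℕ) + 1) := by
  ext ⟨i, hi⟩
  simp only [Matrix.mulVec, dotProduct, Emat, Matrix.of_apply, ite_mul, zero_mul]
  obtain hi' | hi' : i + 1 < n ∨ i + 1 = n := by lia
  · rw [sum_eq_single ⟨i + 1, hi'⟩ (fun j _ hj => if_neg (by grind)) (by simp)]
    simp
  · have : NeZero n := ⟨by lia⟩
    rw [sum_eq_zero fun j _ => if_neg (by lia), ← Nat.cast_succ, Nat.succ_eq_add_one, hi', qint,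
      qn_self, zero_div, zero_mul]

lemma mul_Fmat_apply {m : Type*} (M : Matrix m (Fin n) ℂ) (c : ℂ) (p : m) (t : Fin n) :
    (M * Fmat n c) p t =
      if h : (t : ℕ) + 1 < n then M p ⟨t + 1, h⟩ * qint n (2 * c - (t : ℕ)) else 0 := by
  simp only [Matrix.mul_apply, Fmat, Matrix.of_apply, mul_ite, mul_zero]
  split_ifs with h
  · rw [sum_eq_single ⟨t + 1, h⟩ (fun j _ hj => if_neg (by grind)) (by simp), if_pos rfl]
  · exact sum_eq_zero fun j _ => if_neg (by lia)

lemma mul_Emat_apply_zero [NeZero n] {m : Type*} (M : Matrix m (Fin n) ℂ) (p : m) :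
    (M * Emat n) p 0 = 0 := by
  simp [Matrix.mul_apply, Emat]

lemma Emat_mul_Fmat [n.AtLeastTwo] (a : ℂ) : Emat n * Fmat n a = Fmat n a * Emat n + Hmat n a := by
  have hone : qn n 1 ≠ 0 := qn_one_ne_zero
  refine matrix_ext_of_mulVec_natCast fun g hg => ?_
  rw [Matrix.add_mulVec, ← Matrix.mulVec_mulVec, ← Matrix.mulVec_mulVec, Fmat_mulVec a hg,
    Emat_mulVec g, Emat_mulVec fun x => qint n (2 * a - x + 1) * g (x - 1),
    Fmat_mulVec a (g := fun x => qint n (x + 1) * g (x + 1)) (by simp [qint, qn_zero])]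
  ext i
  have hrel := qn_add_one_mul_qn_sub_sub (n := n) (i : ℕ) (2 * a)
  rw [← mul_sub] at hrel
  simp only [Pi.add_apply, Hmat, Matrix.mulVec_diagonal, qint, sub_add_cancel,
    add_sub_cancel_right, sub_add_eq_sub_sub]
  field_simp
  linear_combination g (i : ℕ) * hrel

lemma Emat_mul_Kinvmat (a : ℂ) : Emat n * Kinvmat n a = xic n 1 • (Kinvmat n a * Emat n) := by
  ext i j
  simp only [Kinvmat_eq_diagonal, Emat, Matrix.mul_diagonal, Matrix.diagonal_mul, Matrix.smul_apply,
    Matrix.of_apply, smul_eq_mul]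
  split_ifs with h
  · simp only [h, mul_comm (qint _ _), ← xic_add, ← mul_assoc, Nat.cast_succ]
    ring_nf
  · simp only [mul_zero, zero_mul]

lemma Kmat_mul_Emat (a : ℂ) : Kmat n a * Emat n = xic n 1 • (Emat n * Kmat n a) := by
  ext i j
  simp only [Kmat_eq_diagonal, Emat, Matrix.mul_diagonal, Matrix.diagonal_mul, Matrix.smul_apply,
    Matrix.of_apply, smul_eq_mul]
  split_ifs with h
  · simp only [h, mul_comm (qint _ _), ← xic_add, ← mul_assoc, Nat.cast_succ]
    ring_nf
  · simp only [mul_zero, zero_mul]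

lemma Fmat_mul_Kmat (a : ℂ) : Fmat n a * Kmat n a = xic n 1 • (Kmat n a * Fmat n a) := by
  ext i j
  simp only [Kmat_eq_diagonal, Fmat, Matrix.mul_diagonal, Matrix.diagonal_mul, Matrix.smul_apply,
    Matrix.of_apply, smul_eq_mul]
  split_ifs with h
  · simp only [h, mul_comm (qint _ _), ← xic_add, ← mul_assoc, Nat.cast_succ]
    ring_nf
  · simp only [mul_zero, zero_mul]

lemma Kinvmat_mul_Fmat (a : ℂ) : Kinvmat n a * Fmat n a = xic n 1 • (Fmat n a * Kinvmat n a) := by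
  ext i j
  simp only [Kinvmat_eq_diagonal, Fmat, Matrix.mul_diagonal, Matrix.diagonal_mul, Matrix.smul_apply,
    Matrix.of_apply, smul_eq_mul]
  split_ifs with h
  · simp only [h, mul_left_comm, mul_comm (qint _ _), ← xic_add, ← mul_assoc, Nat.cast_succ]
    ring_nf
  · simp only [mul_zero, zero_mul]

/-- The action of the coproduct `E ⊗ K + K⁻¹ ⊗ E` of `E` on `V^a ⊗ V^b`. -/
def coprodE (n : ℕ) (a b : ℂ) : Matrix (Fin n × Fin n) (Fin n × Fin n) ℂ :=
  Emat n ⊗ₖ Kmat n b + Kinvmat n a ⊗ₖ Emat n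

/-- The action of the coproduct `F ⊗ K + K⁻¹ ⊗ F` of `F` on `V^a ⊗ V^b`. -/
def coprodF (n : ℕ) (a b : ℂ) : Matrix (Fin n × Fin n) (Fin n × Fin n) ℂ :=
  Fmat n a ⊗ₖ Kmat n b + Kinvmat n a ⊗ₖ Fmat n b

/-- The action of the Cartan element of `Hmat` on `V^a ⊗ V^b`. -/
def coprodH (n : ℕ) (a b : ℂ) : Matrix (Fin n × Fin n) (Fin n × Fin n) ℂ :=
  .diagonal fun p => qint n (2 * (a + b - (p.1 : ℕ) - (p.2 : ℕ)))

lemma coprodF_mulVec (a b : ℂ) {g : ℂ → ℂ → ℂ} (hl : ∀ y, g (-1) y = 0) (hr : ∀ x, g x (-1) = 0)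
    (p : Fin n × Fin n) :
    (coprodF n a b *ᵥ fun q => g (q.1 : ℕ) (q.2 : ℕ)) p =
      qint n (2 * a - (p.1 : ℕ) + 1) * xic n (b - (p.2 : ℕ)) * g ((p.1 : ℕ) - 1) (p.2 : ℕ) +
        xic n (-(a - (p.1 : ℕ))) * qint n (2 * b - (p.2 : ℕ) + 1) *
          g (p.1 : ℕ) ((p.2 : ℕ) - 1) := by
  rw [coprodF, Matrix.add_mulVec, Pi.add_apply,
    kronecker_mulVec_apply _ _ fun i j : Fin n => g (i : ℕ) (j : ℕ),
    kronecker_mulVec_apply _ _ fun i j : Fin n => g (i : ℕ) (j : ℕ)]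
  simp only [Kmat_eq_diagonal, Kinvmat_eq_diagonal, Matrix.mulVec_diagonal]
  rw [Fmat_mulVec a (g := fun x => xic n (b - (p.2 : ℕ)) * g x (p.2 : ℕ)) (by simp [hl]),
    Fmat_mulVec b (hr _)]
  ring

lemma coprodE_mulVec (a b : ℂ) (g : ℂ → ℂ → ℂ) (p : Fin n × Fin n) :
    (coprodE n a b *ᵥ fun q => g (q.1 : ℕ) (q.2 : ℕ)) p =
      qint n ((p.1 : ℕ) + 1) * xic n (b - (p.2 : ℕ)) * g ((p.1 : ℕ) + 1) (p.2 : ℕ) +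
        xic n (-(a - (p.1 : ℕ))) * qint n ((p.2 : ℕ) + 1) * g (p.1 : ℕ) ((p.2 : ℕ) + 1) := by
  rw [coprodE, Matrix.add_mulVec, Pi.add_apply,
    kronecker_mulVec_apply _ _ fun i j : Fin n => g (i : ℕ) (j : ℕ),
    kronecker_mulVec_apply _ _ fun i j : Fin n => g (i : ℕ) (j : ℕ)]
  simp only [Kmat_eq_diagonal, Kinvmat_eq_diagonal, Matrix.mulVec_diagonal]
  rw [Emat_mulVec fun x => xic n (b - (p.2 : ℕ)) * g x (p.2 : ℕ), Emat_mulVec (g (p.1 : ℕ))]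
  ring

lemma coprodH_eq_kronecker (a b : ℂ) :
    coprodH n a b = Hmat n a ⊗ₖ (Kmat n b * Kmat n b) +
      (Kinvmat n a * Kinvmat n a) ⊗ₖ Hmat n b := by
  simp only [coprodH, Hmat, Kmat_eq_diagonal, Kinvmat_eq_diagonal, Matrix.diagonal_mul_diagonal,
    Matrix.diagonal_kronecker_diagonal, Matrix.diagonal_add]
  congr 1
  ext ⟨i, j⟩
  have hqn := qn_add (n := n) (2 * (b - (j : ℕ))) (2 * (a - (i : ℕ)))
  rw [show 2 * (b - (j : ℕ)) + 2 * (a - (i : ℕ)) = 2 * (a + b - (i : ℕ) - (j : ℕ)) by ring] at hqn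
  simp only [qint, hqn, ← xic_add, ← two_mul, mul_neg]
  ring

lemma coprodE_mul_coprodF [n.AtLeastTwo] (a b : ℂ) :
    coprodE n a b * coprodF n a b = coprodF n a b * coprodE n a b + coprodH n a b := by
  simp only [coprodE, coprodF, coprodH_eq_kronecker, mul_add, add_mul,
    ← Matrix.mul_kronecker_mul, Emat_mul_Fmat, Emat_mul_Kinvmat, Fmat_mul_Kmat, Kinvmat_mul_Fmat,
    Kmat_mul_Emat, Matrix.add_kronecker, Matrix.kronecker_add, Matrix.smul_kronecker,
    Matrix.kronecker_smul]
  abel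

end Representations

section Intertwiners

variable {n k : ℕ} {a b c : ℂ}

lemma Yinc_apply [NeZero n] (hc : a + b - c = k) (p : Fin n × Fin n) (t : Fin n) :
    Yinc n a b c p t = cgCoeff n k a b c (p.1 : ℕ) (p.2 : ℕ) t := by
  simp only [Yinc, Matrix.of_apply, hc]
  split_ifs with h
  · exact CG_eq_cgCoeff hc t.2 h
  · rw [cgCoeff_of_ne h]

lemma mul_Yinc_apply [NeZero n] (hc : a + b - c = k) {m : Type*}
    (D : Matrix m (Fin n × Fin n) ℂ) (p : m) (t : Fin n) :
    (D * Yinc n a b c) p t =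
      (D *ᵥ fun q => cgCoeff n k a b c (q.1 : ℕ) (q.2 : ℕ) t) p := by
  simp only [Matrix.mul_apply, Matrix.mulVec, dotProduct, Yinc_apply hc]

lemma coprodF_mul_Yinc [NeZero n] (hcn : NotHalfInt c) (hc : a + b - c = k) :
    coprodF n a b * Yinc n a b c = Yinc n a b c * Fmat n c := by
  ext p t
  have hleft : (coprodF n a b * Yinc n a b c) p t =
      qint n (2 * c - (t : ℕ)) * cgCoeff n k a b c (p.1 : ℕ) (p.2 : ℕ) (t + 1) := by
    have hrec := qn_mul_cgCoeff_succ (n := n) hcn hc (p.1 : ℕ) (p.2 : ℕ) t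
    rw [mul_Yinc_apply hc, coprodF_mulVec a b (g := fun u v => cgCoeff n k a b c u v t)
      (fun v => cgCoeff_neg_one_left v t) (fun u => cgCoeff_neg_one_right u t)]
    simp only [qint]
    linear_combination -hrec / qn n 1
  rw [hleft, mul_Fmat_apply]
  split_ifs with h
  · rw [Yinc_apply hc, mul_comm]
  · rw [show (t : ℕ) + 1 = n by lia, cgCoeff_self p.1.2 p.2.2, mul_zero]

lemma coprodE_mul_Yinc_apply_zero [NeZero n] (hk : k < n) (hc : a + b - c = k)
    (p : Fin n × Fin n) : (coprodE n a b * Yinc n a b c) p 0 = 0 := by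
  have hrec := qn_mul_cgCoeff_zero_add (n := n) (a := a) (b := b) (c := c) hk p.1 p.2
  rw [mul_Yinc_apply hc, coprodE_mulVec a b (fun u v => cgCoeff n k a b c u v (0 : Fin n))]
  simp only [qint, Fin.val_zero]
  linear_combination hrec / qn n 1

lemma coprodH_mul_Yinc [NeZero n] (hc : a + b - c = k) :
    coprodH n a b * Yinc n a b c = Yinc n a b c * Hmat n c := by
  ext p t
  rw [coprodH, Hmat, Matrix.diagonal_mul, Matrix.mul_diagonal, Yinc_apply hc]
  by_cases h : ((p.1 : ℕ) : ℂ) + (p.2 : ℕ) - (t : ℕ) = k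
  · rw [mul_comm, show a + b - (p.1 : ℕ) - (p.2 : ℕ) = c - (t : ℕ) by linear_combination hc - h]
  · rw [cgCoeff_of_ne h, mul_zero, zero_mul]

/-- Holds because `e_0` generates `V^c` under `F`. -/
lemma eq_zero_of_mul_Fmat_eq [n.AtLeastTwo] (hcn : NotHalfInt c) {m : Type*} [Fintype m]
    {M : Matrix m (Fin n) ℂ} {D : Matrix m m ℂ} (hF : M * Fmat n c = D * M)
    (h0 : ∀ i, M i 0 = 0) : M = 0 := by
  have hcol (t : ℕ) : ∀ (ht : t < n) i, M i ⟨t, ht⟩ = 0 := by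
    induction t with
    | zero => exact fun _ => h0
    | succ t ih =>
      intro ht i
      have hq : qint n (2 * c - t) ≠ 0 :=
        div_ne_zero (by simpa [sub_eq_add_neg] using hcn.qn_ne_zero (-t : ℤ)) qn_one_ne_zero
      have hentry := congr_fun₂ hF i ⟨t, by lia⟩
      rw [mul_Fmat_apply, dif_pos ht, Matrix.mul_apply,
        sum_eq_zero fun j _ => by rw [ih, mul_zero]] at hentry
      exact (mul_eq_zero.1 hentry).resolve_right hq
  ext i t
  exact hcol t t.2 i

lemma coprodE_mul_Yinc [n.AtLeastTwo] (hk : k < n) (hcn : NotHalfInt c) (hc : a + b - c = k) :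
    coprodE n a b * Yinc n a b c = Yinc n a b c * Emat n := by
  refine sub_eq_zero.1 (eq_zero_of_mul_Fmat_eq hcn (D := coprodF n a b) ?_ fun p => ?_)
  · have hF := coprodF_mul_Yinc (n := n) hcn hc
    calc (coprodE n a b * Yinc n a b c - Yinc n a b c * Emat n) * Fmat n c
        = coprodE n a b * (Yinc n a b c * Fmat n c) - Yinc n a b c * (Emat n * Fmat n c) := by
          rw [Matrix.sub_mul, Matrix.mul_assoc, Matrix.mul_assoc]
      _ = coprodE n a b * coprodF n a b * Yinc n a b c -
            Yinc n a b c * Fmat n c * Emat n - Yinc n a b c * Hmat n c := by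
          rw [Emat_mul_Fmat, Matrix.mul_add, ← Matrix.mul_assoc (Yinc n a b c), ← hF,
            ← Matrix.mul_assoc (coprodE n a b), sub_add_eq_sub_sub]
      _ = coprodF n a b * (coprodE n a b * Yinc n a b c - Yinc n a b c * Emat n) := by
          rw [coprodE_mul_coprodF, ← hF, ← coprodH_mul_Yinc hc]
          simp only [Matrix.add_mul, Matrix.mul_sub, Matrix.mul_assoc]
          abel
  · rw [Matrix.sub_apply, coprodE_mul_Yinc_apply_zero hk hc, mul_Emat_apply_zero, sub_zero]

lemma apply_zero_eq_zero_of_commute_Emat [n.AtLeastTwo] {P : Matrix (Fin n) (Fin n) ℂ}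
    (hE : Commute P (Emat n)) {i : Fin n} (hi : i ≠ 0) : P i 0 = 0 := by
  obtain ⟨j, hj⟩ : ∃ j : ℕ, (i : ℕ) = j + 1 :=
    Nat.exists_eq_succ_of_ne_zero fun h => hi (Fin.ext (by simpa using h))
  have hrow : (Emat n * P) ⟨j, by lia⟩ 0 = qint n (i : ℕ) * P i 0 := by
    simp only [Matrix.mul_apply, Emat, Matrix.of_apply, ite_mul, zero_mul]
    rw [sum_eq_single i (fun l _ hl => if_neg (by grind)) (by simp), if_pos hj]
  rw [← hE.eq, mul_Emat_apply_zero, eq_comm] at hrow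
  exact (mul_eq_zero.1 hrow).resolve_left
    (div_ne_zero (qn_natCast_ne_zero (by lia) i.2) qn_one_ne_zero)

lemma eq_zero_of_commute_Emat [n.AtLeastTwo] (hcn : NotHalfInt c) {c' : ℂ}
    {P : Matrix (Fin n) (Fin n) ℂ} (hE : Commute P (Emat n)) (hF : P * Fmat n c = Fmat n c' * P)
    (h0 : P 0 0 = 0) : P = 0 := by
  refine eq_zero_of_mul_Fmat_eq hcn hF fun i => ?_
  by_cases hi : i = 0
  · rw [hi, h0]
  · exact apply_zero_eq_zero_of_commute_Emat hE hi

lemma eq_smul_one_of_commute [n.AtLeastTwo] (hcn : NotHalfInt c) {P : Matrix (Fin n) (Fin n) ℂ}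
    (hE : Commute P (Emat n)) (hF : Commute P (Fmat n c)) : P = P 0 0 • 1 := by
  have hscalar (M : Matrix (Fin n) (Fin n) ℂ) : Commute (P 0 0 • 1) M :=
    (Commute.one_left M).smul_left _
  refine sub_eq_zero.1 (eq_zero_of_commute_Emat (c' := c) hcn (hE.sub_left (hscalar _))
    (hF.sub_left (hscalar _)).eq ?_)
  simp

end Intertwiners

section Duality

variable {n k : ℕ} {a b c : ℂ}

/-- The index reversal `e_u ⊗ e_v ↦ e_{n-1-v} ⊗ e_{n-1-u}`, through which the projections
`Y_{a,b}^c` are the transposes of the inclusions with the dual weights `n-1-b, n-1-a, n-1-c`. -/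
def revSwap (n : ℕ) : Equiv.Perm (Fin n × Fin n) :=
  (Equiv.prodComm _ _).trans (Fin.revPerm.prodCongr Fin.revPerm)

lemma revSwap_apply (p : Fin n × Fin n) : revSwap n p = (p.2.rev, p.1.rev) := rfl

lemma natCast_rev (i : Fin n) : ((i.rev : ℕ) : ℂ) = n - 1 - (i : ℕ) := by
  rw [Fin.val_rev, Nat.cast_sub (by lia)]
  push_cast
  ring

lemma Yproj_eq_transpose : Yproj n a b c =
    ((Yinc n (n - 1 - b) (n - 1 - a) (n - 1 - c)).submatrix (revSwap n) Fin.revPerm)ᵀ := by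
  ext t p
  simp only [Yproj, Yinc, Matrix.of_apply, Matrix.transpose_apply, Matrix.submatrix_apply,
    revSwap_apply, Fin.revPerm_apply, natCast_rev]
  simp only [Fin.val_rev, Nat.sub_sub, Nat.add_comm 1]
  refine if_congr ⟨fun h => ?_, fun h => ?_⟩ rfl rfl <;> linear_combination -h

lemma Emat_revPerm : ((Emat n).submatrix Fin.revPerm Fin.revPerm)ᵀ = Emat n := by
  ext i j
  have : NeZero n := ⟨by have := i.2; lia⟩
  simp only [Emat, Matrix.of_apply, Matrix.transpose_apply, Matrix.submatrix_apply,
    Fin.revPerm_apply, natCast_rev, qint]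
  refine if_ctx_congr (by simp only [Fin.val_rev]; lia) (fun h => ?_) fun _ => rfl
  rw [h, ← qn_self_sub]
  push_cast
  ring_nf

lemma Fmat_revPerm (a : ℂ) :
    ((Fmat n (n - 1 - a)).submatrix Fin.revPerm Fin.revPerm)ᵀ = Fmat n a := by
  ext i j
  have : NeZero n := ⟨by have := i.2; lia⟩
  simp only [Fmat, Matrix.of_apply, Matrix.transpose_apply, Matrix.submatrix_apply,
    Fin.revPerm_apply, natCast_rev, qint]
  refine if_ctx_congr (by simp only [Fin.val_rev]; lia) (fun h => ?_) fun _ => rfl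
  rw [h, ← qn_self_sub]
  push_cast
  ring_nf

lemma Kmat_revPerm (a : ℂ) :
    ((Kmat n (n - 1 - a)).submatrix Fin.revPerm Fin.revPerm)ᵀ = Kinvmat n a := by
  rw [Kmat_eq_diagonal, Kinvmat_eq_diagonal, Matrix.submatrix_diagonal_equiv,
    Matrix.diagonal_transpose]
  congr 1
  ext i
  simp only [Function.comp_apply, Fin.revPerm_apply, natCast_rev]
  ring_nf

lemma Kinvmat_revPerm (a : ℂ) :
    ((Kinvmat n (n - 1 - a)).submatrix Fin.revPerm Fin.revPerm)ᵀ = Kmat n a := by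
  rw [Kmat_eq_diagonal, Kinvmat_eq_diagonal, Matrix.submatrix_diagonal_equiv,
    Matrix.diagonal_transpose]
  congr 1
  ext i
  simp only [Function.comp_apply, Fin.revPerm_apply, natCast_rev]
  ring_nf

lemma kronecker_revSwap (A B : Matrix (Fin n) (Fin n) ℂ) :
    ((A ⊗ₖ B).submatrix (revSwap n) (revSwap n))ᵀ =
      (B.submatrix Fin.revPerm Fin.revPerm)ᵀ ⊗ₖ (A.submatrix Fin.revPerm Fin.revPerm)ᵀ := by
  ext p q
  exact mul_comm _ _

lemma coprodE_revSwap (a b : ℂ) :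
    ((coprodE n (n - 1 - b) (n - 1 - a)).submatrix (revSwap n) (revSwap n))ᵀ =
      coprodE n a b := by
  rw [coprodE, Matrix.submatrix_add, Pi.add_apply, Pi.add_apply, Matrix.transpose_add,
    kronecker_revSwap, kronecker_revSwap, Emat_revPerm, Kmat_revPerm, Kinvmat_revPerm, add_comm,
    coprodE]

lemma coprodF_revSwap (a b : ℂ) :
    ((coprodF n (n - 1 - b) (n - 1 - a)).submatrix (revSwap n) (revSwap n))ᵀ =
      coprodF n a b := by
  rw [coprodF, Matrix.submatrix_add, Pi.add_apply, Pi.add_apply, Matrix.transpose_add,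
    kronecker_revSwap, kronecker_revSwap, Fmat_revPerm, Fmat_revPerm, Kmat_revPerm,
    Kinvmat_revPerm, add_comm, coprodF]

lemma Yproj_mul_of_mul_Yinc {D : Matrix (Fin n × Fin n) (Fin n × Fin n) ℂ}
    {X : Matrix (Fin n) (Fin n) ℂ}
    (h : D * Yinc n (n - 1 - b) (n - 1 - a) (n - 1 - c) =
      Yinc n (n - 1 - b) (n - 1 - a) (n - 1 - c) * X) :
    Yproj n a b c * (D.submatrix (revSwap n) (revSwap n))ᵀ =
      (X.submatrix Fin.revPerm Fin.revPerm)ᵀ * Yproj n a b c := by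
  rw [Yproj_eq_transpose, ← Matrix.transpose_mul, ← Matrix.transpose_mul,
    Matrix.submatrix_mul_equiv, Matrix.submatrix_mul_equiv, h]

lemma NotHalfInt.dual (hcn : NotHalfInt c) (n : ℕ) : NotHalfInt (n - 1 - c) := fun m h =>
  hcn (2 * (n - 1) - m) (by push_cast; linear_combination -h)

lemma dual_weight_add_sub (hk : k < n) (hc : a + b - c = k) :
    ((n : ℂ) - 1 - b) + (n - 1 - a) - (n - 1 - c) = (n - 1 - k : ℕ) := by
  rw [Nat.sub_sub, Nat.cast_sub (by lia)]
  push_cast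
  linear_combination -hc

lemma Yproj_mul_coprodE [n.AtLeastTwo] (hk : k < n) (hcn : NotHalfInt c) (hc : a + b - c = k) :
    Yproj n a b c * coprodE n a b = Emat n * Yproj n a b c := by
  have h := Yproj_mul_of_mul_Yinc
    (coprodE_mul_Yinc (by lia) (hcn.dual n) (dual_weight_add_sub hk hc))
  rwa [coprodE_revSwap, Emat_revPerm] at h

lemma Yproj_mul_coprodF [n.AtLeastTwo] (hk : k < n) (hcn : NotHalfInt c) (hc : a + b - c = k) :
    Yproj n a b c * coprodF n a b = Fmat n c * Yproj n a b c := by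
  have h := Yproj_mul_of_mul_Yinc (coprodF_mul_Yinc (hcn.dual n) (dual_weight_add_sub hk hc))
  rwa [coprodF_revSwap, Fmat_revPerm] at h

end Duality

section Orthogonality

variable {n k K : ℕ} {a b c : ℂ}

lemma Yproj_mul_Yinc_commute [n.AtLeastTwo] {k' : ℕ} {c' : ℂ} (hk : k < n) (hk' : k' < n)
    (hcn : NotHalfInt c) (hcn' : NotHalfInt c') (hc : a + b - c = k) (hc' : a + b - c' = k') :
    Commute (Yproj n a b c' * Yinc n a b c) (Emat n) := by
  rw [Commute, SemiconjBy, Matrix.mul_assoc, ← coprodE_mul_Yinc hk hcn hc, ← Matrix.mul_assoc,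
    Yproj_mul_coprodE hk' hcn' hc', Matrix.mul_assoc]

lemma Yproj_mul_Yinc_mul_Fmat [n.AtLeastTwo] {k' : ℕ} {c' : ℂ} (hk' : k' < n)
    (hcn : NotHalfInt c) (hcn' : NotHalfInt c') (hc : a + b - c = k) (hc' : a + b - c' = k') :
    Yproj n a b c' * Yinc n a b c * Fmat n c = Fmat n c' * (Yproj n a b c' * Yinc n a b c) := by
  rw [Matrix.mul_assoc, ← coprodF_mul_Yinc hcn hc, ← Matrix.mul_assoc,
    Yproj_mul_coprodF hk' hcn' hc', Matrix.mul_assoc]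

lemma Yproj_mul_Yinc_of_ne [n.AtLeastTwo] {k' : ℕ} {c' : ℂ} (hk : k < n) (hk' : k' < n)
    (hcn : NotHalfInt c) (hcn' : NotHalfInt c') (hc : a + b - c = k) (hc' : a + b - c' = k')
    (hne : c' ≠ c) : Yproj n a b c' * Yinc n a b c = 0 := by
  refine eq_zero_of_commute_Emat hcn (Yproj_mul_Yinc_commute hk hk' hcn hcn' hc hc')
    (Yproj_mul_Yinc_mul_Fmat hk' hcn hcn' hc hc') ?_
  rw [Matrix.mul_apply]
  refine sum_eq_zero fun p _ => ?_
  simp only [Yproj, Yinc, Matrix.of_apply]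
  by_cases h : ((p.1 : ℕ) : ℂ) + (p.2 : ℕ) - (0 : Fin n) = a + b - c
  · rw [if_neg (h.trans_ne fun h' => hne (sub_right_injective h').symm), zero_mul]
  · rw [if_neg h, mul_zero]

lemma cgNum_top {i j : ℕ} (hij : i + j = k) (hK : K + k + 1 = n) (hc : a + b - c = K) :
    cgNum n K a b c (K + i) (K + j) (K + k) =
      xic n (n * i + (i - j) * (2 * c - n + 2) / 2 + n * K / 2 + K * (a - b)) *
        qrise n (2 * a - K - i + 1) i * qrise n (2 * b - K - j + 1) j * qrise n (2 * c + 2) K := by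
  have hsum := sum_antidiagonal_gaussBinom_mul_qrise (n := n) (2 * b - K + 1) (2 * a - K + 1) K
  rw [show 2 * b - K + 1 + (2 * a - K + 1) = 2 * c + 2 by linear_combination 2 * hc] at hsum
  rw [← hsum, mul_sum, cgNum]
  -- The Gaussian binomials of `z` and `w` are `1` because `z + w = n - 1`, and the factor `[K¦u-z]`
  -- turns the sum over `u - K ≤ z ≤ u`, where `u = K + i`, into a Chu–Vandermonde sum.
  refine (sum_of_injOn (fun p : ℕ × ℕ => (i + p.2, j + p.1)) ?_ ?_ ?_ ?_).symm
  · exact fun p _ q _ h => by ext <;> grind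
  · exact fun p hp => by simp only [mem_coe, HasAntidiagonal.mem_antidiagonal] at hp ⊢; lia
  · rintro ⟨z, w⟩ hzw hout
    have hzw : z + w = K + k := mem_antidiagonal.1 hzw
    have hqbin := qbin_natCast_intCast_eq_zero (n := n) (k := K) (m := K + i - z) <| by
      by_contra! hmem
      exact hout ⟨(w - j, z - i), mem_coe.2 (mem_antidiagonal.2 (by lia)), by ext <;> grind⟩
    push_cast at hqbin
    simp only [hqbin, mul_zero, zero_mul]
  · rintro ⟨r, s⟩ hrs
    obtain rfl : r + s = K := mem_antidiagonal.1 hrs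
    have hn : (n : ℂ) = r + s + (i + j) + 1 := by rw [← hK, ← hij]; push_cast; rfl
    have hgauss : gaussBinom n (i + s) (j + r) = 1 := gaussBinom_eq_one (by lia)
    have hqbin : qbin n (r + s : ℕ) ((r + s : ℕ) + i - (i + s : ℕ)) = gaussBinom n r s := by
      rw [← qbin_natCast_eq_gaussBinom (by lia)]
      congr 1
      push_cast
      ring
    have hphase : n * (i + s : ℕ) +
        ((i + s : ℕ) - (j + r : ℕ)) * (2 * c - (r + s + k : ℕ) + 1) / 2 =
          n * i + (i - j) * (2 * c - n + 2) / 2 + n * (r + s : ℕ) / 2 + (r + s : ℕ) * (a - b) +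
            (s * (2 * b - (r + s : ℕ) + 1) - r * (2 * a - (r + s : ℕ) + 1)) := by
      rw [← hij, hn]
      push_cast at hc ⊢
      linear_combination (r - s) * hc
    rw [hgauss, hqbin, hphase, xic_add _ (s * (2 * b - (r + s : ℕ) + 1) - _), qrise_add, qrise_add,
      show 2 * a - ((r + s : ℕ) + i) + 1 = 2 * a - (r + s : ℕ) - i + 1 by ring,
      show 2 * b - ((r + s : ℕ) + j) + 1 = 2 * b - (r + s : ℕ) - j + 1 by ring,
      show 2 * a - (r + s : ℕ) - i + 1 + i = 2 * a - (r + s : ℕ) + 1 by ring,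
      show 2 * b - (r + s : ℕ) - j + 1 + j = 2 * b - (r + s : ℕ) + 1 by ring]
    ring

lemma sum_fin_prod_eq_sum_antidiagonal {M : Type*} [AddCommMonoid M] (hk : k < n) {f : ℕ → ℕ → M}
    (hf : ∀ i j, i + j ≠ k → f i j = 0) :
    ∑ p : Fin n × Fin n, f p.1 p.2 = ∑ p ∈ antidiagonal k, f p.1 p.2 := by
  have hsub : antidiagonal k ⊆ range n ×ˢ range n := fun p hp => by
    simp only [HasAntidiagonal.mem_antidiagonal, mem_product, mem_range] at hp ⊢; lia
  rw [sum_subset hsub fun p _ hp => hf _ _ (by simpa using hp), sum_product, Finset.sum_range,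
    Fintype.sum_prod_type]
  exact sum_congr rfl fun i _ => (Finset.sum_range (f i)).symm

lemma qrise_two_mul_add_two [NeZero n] (hK : K + k + 1 = n) (c : ℂ) :
    qrise n (2 * c + 2) (n - 1) =
      (-1) ^ K * (qrise n (2 * c + 2) k * qrise n (2 * c - K + 1) K) := by
  have hn : (n : ℂ) = K + k + 1 := mod_cast hK.symm
  rw [show n - 1 = k + K by lia, qrise_add,
    show 2 * c + 2 + k = n + (2 * c - K + 1) by rw [hn]; ring, qrise_self_add]
  ring

lemma qbin_div_qrise_mul_qrise_dual [NeZero n] (hK : K + k + 1 = n) (hcn : NotHalfInt c) :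
    qbin n (2 * (n - 1 - c)) (2 * (n - 1 - c) + K - (n - 1)) /
        qrise n (2 * (n - 1 - c) - (K + k : ℕ) + 1) (K + k) * qrise n (2 * (n - 1 - c) + 2) K =
      (-1) ^ K / qfac n k := by
  have hn : (n : ℂ) = K + k + 1 := mod_cast hK.symm
  have hk0 : qfac n k ≠ 0 := qfac_ne_zero (by lia)
  have hcn0 : qrise n (2 * c + 2) (n - 1) ≠ 0 := mod_cast hcn.qrise_ne_zero 2 (n - 1)
  have hsplit := qrise_two_mul_add_two hK c
  have hqbin : qbin n (2 * (n - 1 - c)) (2 * (n - 1 - c) + K - (n - 1)) =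
      (-1) ^ k * qrise n (2 * c + 2) k / qfac n k := by
    rw [qbin_eq_div (k := k) (by lia) (by rw [hn]; ring),
      qrise_reflect' (y := 2 * c + 2) (by rw [hn]; ring)]
  have hden : qrise n (2 * (n - 1 - c) - (K + k : ℕ) + 1) (K + k) =
      (-1) ^ K * (-1) ^ k * qrise n (2 * c + 2) (n - 1) := by
    rw [qrise_reflect' (y := 2 * c + 2) (by rw [hn]; push_cast; ring), pow_add,
      show K + k = n - 1 by lia]
  have hnum : qrise n (2 * (n - 1 - c) + 2) K = (-1) ^ K * qrise n (2 * c - K + 1) K :=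
    qrise_reflect' (by ring)
  rw [hqbin, hden, hnum, div_div, div_mul_eq_mul_div,
    div_eq_div_iff (mul_ne_zero hk0 (mul_ne_zero (by simp) hcn0)) hk0]
  linear_combination -qfac n k * (-1) ^ k *
    (hsplit + qrise n (2 * c + 2) (n - 1) * (Even.add_self K).neg_one_pow (α := ℂ))

lemma cgCoeff_dual_top [NeZero n] {i j : ℕ} (hij : i + j = k) (hK : K + k + 1 = n)
    (hcn : NotHalfInt c) (hc : a + b - c = k) :
    cgCoeff n K (n - 1 - b) (n - 1 - a) (n - 1 - c) (K + i) (K + j) (K + k) =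
      (-1) ^ K / qfac n k *
        xic n (n * k / 2 - n * j - (j * (2 * b - j + 1) - i * (2 * a - i + 1)) / 2) *
        (xic n (j * (2 * b - k + 1) - i * (2 * a - k + 1)) *
          qrise n (2 * b - k + 1) i * qrise n (2 * a - k + 1) j) := by
  have hn : (n : ℂ) = K + k + 1 := mod_cast hK.symm
  have hkC : (k : ℂ) = i + j := mod_cast hij.symm
  have hleft : qrise n (2 * (n - 1 - b) - K - i + 1) i = qrise n (2 * b - k + 1) i :=
    qrise_reflect (by rw [hn]; ring)
  have hright : qrise n (2 * (n - 1 - a) - K - j + 1) j = qrise n (2 * a - k + 1) j :=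
    qrise_reflect (by rw [hn]; ring)
  have hphase : xic n (-(n * K) / 2) * xic n (n * (K + j - (K + k : ℕ)) +
        ((K + j) * (2 * (n - 1 - a) - (K + j) + 1) - (K + i) * (2 * (n - 1 - b) - (K + i) + 1)) /
          2) * xic n (n * i + (i - j) * (2 * (n - 1 - c) - n + 2) / 2 + n * K / 2 +
            K * (n - 1 - b - (n - 1 - a))) =
      xic n (n * k / 2 - n * j - (j * (2 * b - j + 1) - i * (2 * a - i + 1)) / 2) *
        xic n (j * (2 * b - k + 1) - i * (2 * a - k + 1)) := by
    simp only [← xic_add]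
    congr 1
    rw [hkC] at hc
    push_cast
    rw [hn, hkC]
    linear_combination (i - j) * hc
  rw [cgCoeff_of_eq (by push_cast; rw [hkC]; ring),
    cgNum_top hij hK (by rw [hn]; linear_combination -hc), hleft, hright,
    ← qbin_div_qrise_mul_qrise_dual hK hcn]
  linear_combination qbin n (2 * (n - 1 - c)) (2 * (n - 1 - c) + K - (n - 1)) /
    qrise n (2 * (n - 1 - c) - (K + k : ℕ) + 1) (K + k) * qrise n (2 * (n - 1 - c) + 2) K *
      qrise n (2 * b - k + 1) i * qrise n (2 * a - k + 1) j * hphase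

lemma qbin_two_mul_add_self [NeZero n] (c : ℂ) :
    qbin n (2 * c + n) (2 * c + 1) = qrise n (2 * c + 2) (n - 1) / qfac n (n - 1) := by
  have hn : n - 1 < n := Nat.sub_one_lt (NeZero.ne n)
  rw [qbin_eq_div hn (by rw [Nat.cast_sub NeZero.one_le]; push_cast; ring)]
  ring_nf

lemma qbin_two_mul_add_self_ne_zero [NeZero n] (hcn : NotHalfInt c) :
    qbin n (2 * c + n) (2 * c + 1) ≠ 0 := by
  have hrise : qrise n (2 * c + 2) (n - 1) ≠ 0 := mod_cast hcn.qrise_ne_zero 2 (n - 1)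
  rw [qbin_two_mul_add_self]
  exact div_ne_zero hrise (qfac_ne_zero (Nat.sub_one_lt (NeZero.ne n)))

lemma cgCoeff_dual_top_mul_cgCoeff_zero [NeZero n] {i j : ℕ} (hij : i + j = k)
    (hK : K + k + 1 = n) (hcn : NotHalfInt c) (hc : a + b - c = k) :
    cgCoeff n K (n - 1 - b) (n - 1 - a) (n - 1 - c) (K + i) (K + j) (K + k) *
        cgCoeff n k a b c i j 0 =
      (-1) ^ K * qrise n (2 * c - K + 1) K / qfac n (n - 1) * (gaussBinom n i j *
        (xic n (j * (2 * b - k + 1) - i * (2 * a - k + 1)) *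
          qrise n (2 * b - k + 1) i * qrise n (2 * a - k + 1) j)) := by
  have hn : (n : ℂ) = K + k + 1 := mod_cast hK.symm
  have hphase : xic n (n * k / 2 - n * j - (j * (2 * b - j + 1) - i * (2 * a - i + 1)) / 2) *
      (xic n (-(n * k) / 2) *
        xic n (n * j + (j * (2 * b - j + 1) - i * (2 * a - i + 1)) / 2)) = 1 := by
    rw [← xic_add, ← xic_add, ← xic_zero (n := n)]
    ring_nf
  rw [cgCoeff_dual_top hij hK hcn hc, cgCoeff_zero (by lia) hij, show n - 1 = K + k by lia,
    ← qfac_mul_qfac hK, qbin_eq_div (y := 2 * c + k - (n - 1)) (k := K) (by lia) (by rw [hn]; ring),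
    show 2 * c + k - (n - 1) + 1 = 2 * c - K + 1 by rw [hn]; ring]
  linear_combination (-1) ^ K * qrise n (2 * c - K + 1) K / (qfac n K * qfac n k) *
    gaussBinom n i j * xic n (j * (2 * b - k + 1) - i * (2 * a - k + 1)) *
      qrise n (2 * b - k + 1) i * qrise n (2 * a - k + 1) j * hphase

lemma Yproj_apply [NeZero n] (hK : K + k + 1 = n) (hc : a + b - c = k) (t : Fin n)
    (p : Fin n × Fin n) : Yproj n a b c t p =
      cgCoeff n K (n - 1 - b) (n - 1 - a) (n - 1 - c) (n - 1 - (p.2 : ℕ)) (n - 1 - (p.1 : ℕ))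
        (n - 1 - t) := by
  have hdual := dual_weight_add_sub (n := n) (by lia) hc
  rw [show n - 1 - k = K by lia] at hdual
  rw [Yproj_eq_transpose, Matrix.transpose_apply, Matrix.submatrix_apply, Yinc_apply hdual,
    revSwap_apply, Fin.revPerm_apply, natCast_rev, natCast_rev, Fin.val_rev, Nat.sub_sub,
    Nat.add_comm 1]

lemma Yproj_mul_Yinc_zero_zero [NeZero n] (hk : k < n) (hcn : NotHalfInt c)
    (hc : a + b - c = k) :
    (Yproj n a b c * Yinc n a b c) 0 0 = qbin n (2 * c + n) (2 * c + 1) := by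
  obtain ⟨K, hK⟩ : ∃ K, K + k + 1 = n := ⟨n - 1 - k, by lia⟩
  have hn : (n : ℂ) = K + k + 1 := mod_cast hK.symm
  have hsum := sum_antidiagonal_gaussBinom_mul_qrise (n := n) (2 * b - k + 1) (2 * a - k + 1) k
  rw [show 2 * b - k + 1 + (2 * a - k + 1) = 2 * c + 2 by linear_combination 2 * hc] at hsum
  rw [Matrix.mul_apply, qbin_two_mul_add_self, qrise_two_mul_add_two hK, ← hsum]
  simp only [Yproj_apply hK hc, Yinc_apply hc, Fin.val_zero, Nat.sub_zero]
  rw [sum_fin_prod_eq_sum_antidiagonal hk (f := fun i j =>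
    cgCoeff n K (n - 1 - b) (n - 1 - a) (n - 1 - c) (n - 1 - j) (n - 1 - i) (n - 1) *
      cgCoeff n k a b c i j 0)]
  · rw [sum_mul, mul_sum, sum_div]
    refine sum_congr rfl fun p hp => ?_
    have hp : p.1 + p.2 = k := mem_antidiagonal.1 hp
    have hpC : (k : ℂ) = p.1 + p.2 := mod_cast hp.symm
    have hprod := cgCoeff_dual_top_mul_cgCoeff_zero hp hK hcn hc
    rw [show n - 1 = K + k by lia,
      show (n : ℂ) - 1 - p.2 = K + p.1 by rw [hn, hpC]; ring,
      show (n : ℂ) - 1 - p.1 = K + p.2 by rw [hn, hpC]; ring, hprod]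
    rw [show n - 1 = K + k by lia]
    ring
  · intro i j hij
    rw [cgCoeff_of_ne (k := k), mul_zero]
    exact fun h => hij (by rw [Nat.cast_zero, sub_zero] at h; exact_mod_cast h)

lemma Yproj_mul_Yinc_self [n.AtLeastTwo] (hk : k < n) (hcn : NotHalfInt c) (hc : a + b - c = k) :
    Yproj n a b c * Yinc n a b c = qbin n (2 * c + n) (2 * c + 1) • 1 := by
  rw [← Yproj_mul_Yinc_zero_zero hk hcn hc]
  exact eq_smul_one_of_commute hcn (Yproj_mul_Yinc_commute hk hk hcn hcn hc hc)
    (Yproj_mul_Yinc_mul_Fmat hk hcn hcn hc hc)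

end Orthogonality

section Decomposition

lemma sum_mul_eq_one_of_mul_eq_ite {R m ι κ : Type*} [Semiring R] [IsStablyFiniteRing R]
    [Fintype m] [Fintype ι] [Fintype κ] [DecidableEq m] [DecidableEq ι] [DecidableEq κ]
    (e : m ≃ ι × κ) {A : ι → Matrix m κ R} {B : ι → Matrix κ m R}
    (h : ∀ i j, B i * A j = if i = j then 1 else 0) : ∑ i, A i * B i = 1 := by
  have hBA : (Matrix.of fun p : ι × κ => B p.1 p.2) *
      (Matrix.of fun x (p : ι × κ) => A p.1 x p.2) = 1 := by
    ext p q
    refine (congr_fun₂ (h p.1 q.1) p.2 q.2).trans ?_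
    by_cases hpq : p.1 = q.1 <;> simp [hpq, Matrix.one_apply, Prod.ext_iff]
  rw [← (Matrix.mul_eq_one_comm_of_equiv e.symm).1 hBA]
  ext x y
  simp [Matrix.mul_apply, Matrix.sum_apply, Fintype.sum_prod_type]

theorem tensor_identity_decomposition_general (n : ℕ) (hn : 2 ≤ n) (a b : ℂ)
    (hab : NotHalfInt (a + b)) :
    (1 : Matrix (Fin n × Fin n) (Fin n × Fin n) ℂ) =
      ∑ k ∈ range n, (qbin n (2 * (a + b - k) + n) (2 * (a + b - k) + 1))⁻¹ •
        (Yinc n a b (a + b - k) * Yproj n a b (a + b - k)) := by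
  have : n.AtLeastTwo := ⟨hn⟩
  have hcn (k : ℕ) : NotHalfInt (a + b - k) := fun m h =>
    hab (m + 2 * k) (by push_cast; linear_combination h)
  have hc (k : ℕ) : a + b - (a + b - k) = k := sub_sub_cancel _ _
  simp only [Finset.sum_range, ← Matrix.mul_smul]
  refine (sum_mul_eq_one_of_mul_eq_ite (.refl _) fun k l => ?_).symm
  rw [Matrix.smul_mul]
  split_ifs with h
  · rw [h, Yproj_mul_Yinc_self l.2 (hcn l) (hc l),
      inv_smul_smul₀ (qbin_two_mul_add_self_ne_zero (hcn l))]
  · have hne : a + b - (k : ℕ) ≠ a + b - (l : ℕ) := fun h' => h (Fin.ext (by simpa using h'))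
    rw [Yproj_mul_Yinc_of_ne l.2 k.2 (hcn l) (hcn k) (hc l) (hc k) hne, smul_zero]

end Decomposition

theorem tensor_identity_decomposition (n : ℕ) (hn : 2 ≤ n) (a b : ℂ)
    (ha : NotHalfInt a) (hb : NotHalfInt b) (hab : NotHalfInt (a + b)) :
    (1 : Matrix (Fin n × Fin n) (Fin n × Fin n) ℂ)
      = ∑ k ∈ Finset.range n,
          (qbin n (2 * (a + b - (k : ℂ)) + (n : ℂ)) (2 * (a + b - (k : ℂ)) + 1))⁻¹ •
            (Yinc n a b (a + b - (k : ℂ)) * Yproj n a b (a + b - (k : ℂ))) :=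
  tensor_identity_decomposition_general n hn a b hab

end
end
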